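/- Let G be a finite simple graph that is vertex-critical with respect to chromatic number. If χ(G) ≥ Δ(G) ≥ 6 and the set of vertices of G of degree at least χ(G) is an independent set, then G is isomorphic to K_{χ(G)}. -/

import Mathlib

open SimpleGraph

/-!
Write `χ(G) = s + 3` with `3 ≤ s`. By criticality `G` becomes `(s + 2)`-colourable when a vertex `x`
is left uncoloured, and the other vertices are then partitioned into a class coloured with `s`
colours and a class coloured with `2` colours; `x` may join either class. Among all such pairs of a
vertex and a partition, take one with the fewest edges inside the classes. When `x` is low, that is
of degree `s + 2`, it has exactly as many neighbours in its class as that class has colours, and the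
same persists when `x` is replaced by a vertex of its component or is moved to the other class.
Hence, as in the proof of Brooks' theorem, the component of `x` is a complete graph on `s + 1`
vertices or an odd cycle, according to its class.

Moving low vertices back and forth between the classes opens and closes such cliques and cycles. As
long as `G` contains no clique on `s + 3` vertices, all the cliques visited are pairwise disjoint,
and so are all the cycles: a first coincidence would either be forced back to the previous round,
where it assembles a clique and a triangle into a clique on `s + 3` vertices, or contradict earlier
disjointness. This walk never ends, so a finite `G` contains a clique on `s + 3` vertices, and then
criticality leaves no other vertex.
-/

namespace CriticalGraph

section Subgraphs

variable {V : Type*} {G H : SimpleGraph V} {s t : Set V} {u v x : V}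

theorem reachable_induction {P : V → Prop} (refl : P x)
    (step : ∀ y z, G.Reachable x y → G.Adj y z → P y → P z) (h : G.Reachable x v) : P v := by
  rw [reachable_iff_reflTransGen] at h
  induction h with
  | refl => exact refl
  | tail hy hyz ih => exact step _ _ ((reachable_iff_reflTransGen _ _).2 hy) hyz ih

theorem reachable_of_ncard_neighborSet_le [Finite V] (hGH : G ≤ H)
    (hdeg : ∀ y, G.Reachable x y → (H.neighborSet y).ncard ≤ (G.neighborSet y).ncard)
    (h : H.Reachable x v) : G.Reachable x v :=
  reachable_induction .rfl (fun y z _ hyz hy => by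
    have hN : G.neighborSet y = H.neighborSet y :=
      Set.eq_of_subset_of_ncard_le (fun _ hw => hGH hw) (hdeg y hy)
    exact hy.trans (Adj.reachable (hN.symm ▸ hyz : z ∈ G.neighborSet y))) h

/-- The graph on the same vertices as `G` that keeps only the edges with both ends in `s`.
Staying on the vertex type `V` lets us change `s` without transporting vertices. -/
abbrev restrict (G : SimpleGraph V) (s : Set V) : SimpleGraph V := (G.induce s).spanningCoe

theorem restrict_adj : (restrict G s).Adj u v ↔ G.Adj u v ∧ u ∈ s ∧ v ∈ s := by
  simp only [map_adj, comap_adj, Function.Embedding.subtype_apply, Subtype.exists]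
  grind

theorem restrict_le : restrict G s ≤ G := fun _ _ h => (restrict_adj.1 h).1

theorem restrict_mono (hGH : G ≤ H) (hst : s ⊆ t) : restrict G s ≤ restrict H t := fun _ _ h =>
  have ⟨h, hu, hv⟩ := restrict_adj.1 h
  restrict_adj.2 ⟨hGH h, hst hu, hst hv⟩

theorem mem_of_restrict_reachable (h : (restrict G s).Reachable u v) (hu : u ∈ s) : v ∈ s :=
  reachable_induction hu (fun _ _ _ hyz _ => (restrict_adj.1 hyz).2.2) h

theorem exists_adj_reachable_deleteIncidenceSet (h : G.Reachable u x) (hux : u ≠ x) :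
    ∃ v, G.Adj x v ∧ (G.deleteIncidenceSet x).Reachable u v := by
  refine (reachable_induction (P := fun y => (∃ v, G.Adj x v ∧
    (G.deleteIncidenceSet x).Reachable u v) ∨ y ≠ x ∧ (G.deleteIncidenceSet x).Reachable u y)
    (.inr ⟨hux, .rfl⟩) (fun y z _ hyz hy => ?_) h).resolve_right fun h => h.1 rfl
  refine hy.elim .inl fun ⟨hyx, hy⟩ => ?_
  rcases eq_or_ne z x with rfl | hzx
  · exact .inl ⟨y, hyz.symm, hy⟩
  · exact .inr ⟨hzx, hy.trans (Adj.reachable (deleteIncidenceSet_adj.2 ⟨hyz, hyx, hzx⟩))⟩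

theorem deleteIncidenceSet_mono (hGH : G ≤ H) :
    G.deleteIncidenceSet x ≤ H.deleteIncidenceSet x := fun _ _ h =>
  have ⟨h, hu, hv⟩ := deleteIncidenceSet_adj.1 h
  deleteIncidenceSet_adj.2 ⟨hGH h, hu, hv⟩

end Subgraphs

section Recoloring

variable {V α : Type*} {H : SimpleGraph V}

theorem exists_recoloring {u : V} (c : (H.deleteIncidenceSet u).Coloring α) {m : α}
    (hm : ∀ v, H.Adj u v → c v ≠ m) : ∃ c' : H.Coloring α, c' u = m ∧ ∀ v ≠ u, c' v = c v := by
  classical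
  refine ⟨Coloring.mk (Function.update c u m) fun {v w} hvw => ?_,
    by simp [Coloring.mk], fun v hv => Function.update_of_ne hv ..⟩
  rcases eq_or_ne v u with rfl | hv
  · simpa [hvw.ne'] using (hm w hvw).symm
  · rcases eq_or_ne w u with rfl | hw
    · simpa [hv] using hm v hvw.symm
    · simpa [hv, hw] using c.valid (deleteIncidenceSet_adj.2 ⟨hvw, hv, hw⟩)

theorem exists_kempe_swap [DecidableEq α] (c : H.Coloring α) (i j : α) (u : V) :
    ∃ c' : H.Coloring α,
      (∀ v, (restrict H (c ⁻¹' {i, j})).Reachable u v → c' v = Equiv.swap i j (c v)) ∧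
      ∀ v, ¬ (restrict H (c ⁻¹' {i, j})).Reachable u v → c' v = c v := by
  classical
  set K := restrict H (c ⁻¹' {i, j})
  have swap_ne {v w : V} (hvw : H.Adj v w) (hv : K.Reachable u v) (hw : ¬ K.Reachable u w) :
      Equiv.swap i j (c v) ≠ c w := by
    have hij : ¬ ((c v = i ∨ c v = j) ∧ (c w = i ∨ c w = j)) := fun h =>
      hw (hv.trans (Adj.reachable (restrict_adj.2 ⟨hvw, h⟩)))
    have hne := c.valid hvw
    rw [Equiv.swap_apply_def]
    grind
  refine ⟨Coloring.mk (fun v => if K.Reachable u v then Equiv.swap i j (c v) else c v)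
    fun {v w} hvw => ?_, fun v hv => if_pos hv, fun v hv => if_neg hv⟩
  by_cases hv : K.Reachable u v <;> by_cases hw : K.Reachable u w <;> simp only [hv, hw, if_true,
    if_false]
  · exact (Equiv.swap i j).injective.ne (c.valid hvw)
  · exact swap_ne hvw hv hw
  · exact (swap_ne hvw.symm hw hv).symm
  · exact c.valid hvw

end Recoloring

section Brooks

variable {V : Type*} {H : SimpleGraph V} {n : ℕ} {x : V}

theorem exists_adj_color_eq (hH : ¬ H.Colorable n) (c : (H.deleteIncidenceSet x).Coloring (Fin n))
    (i : Fin n) : ∃ v, H.Adj x v ∧ c v = i := by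
  by_contra! hi
  exact hH ⟨(exists_recoloring c hi).choose⟩

theorem exists_adj_eq_of_not_colorable (hH : ¬ H.Colorable n)
    (hx : (H.deleteIncidenceSet x).Colorable n) (f : V → Fin n) :
    ∃ u w, H.Reachable x u ∧ H.Adj u w ∧ f u = f w := by
  classical
  by_contra! hf
  obtain ⟨c⟩ := hx
  refine hH ⟨Coloring.mk (fun v => if H.Reachable x v then f v else c v) fun {u v} huv => ?_⟩
  by_cases hu : H.Reachable x u
  · have hv := hu.trans huv.reachable
    simpa [hu, hv] using hf u v hu huv
  · have hv : ¬ H.Reachable x v := fun hv => hu (hv.trans huv.symm.reachable)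
    have hne {w : V} (hw : ¬ H.Reachable x w) : w ≠ x := fun h => hw (h ▸ .rfl)
    simpa [hu, hv] using c.valid (deleteIncidenceSet_adj.2 ⟨huv, hne hu, hne hv⟩)

variable [Finite V]

theorem le_ncard_neighborSet (hH : ¬ H.Colorable n) (hx : (H.deleteIncidenceSet x).Colorable n) :
    n ≤ (H.neighborSet x).ncard := by
  obtain ⟨c⟩ := hx
  have hsurj : c '' H.neighborSet x = Set.univ :=
    Set.eq_univ_of_forall fun i => exists_adj_color_eq hH c i
  simpa [hsurj] using Set.ncard_image_le (f := c) (H.neighborSet x).toFinite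

theorem color_injOn_neighborSet (hH : ¬ H.Colorable n) (hd : (H.neighborSet x).ncard ≤ n)
    (c : (H.deleteIncidenceSet x).Coloring (Fin n)) : Set.InjOn c (H.neighborSet x) := by
  have hsurj (i : Fin n) : ∃ v, ∃ _ : v ∈ H.neighborSet x, c v = i := by
    simpa using exists_adj_color_eq hH c i
  exact fun _ hu _ hv huv => Set.inj_on_of_surj_on_of_ncard_le (t := Set.univ) (fun v _ => c v)
    (fun _ _ => Set.mem_univ _) (fun i _ => hsurj i) (by simpa using hd) hu hv huv

theorem exists_coloring_shift (hH : ¬ H.Colorable n) (hd : (H.neighborSet x).ncard ≤ n)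
    (c : (H.deleteIncidenceSet x).Coloring (Fin n)) {y : V} (hxy : H.Adj x y) :
    ∃ c' : (H.deleteIncidenceSet y).Coloring (Fin n), c' x = c y ∧ ∀ v ≠ x, c' v = c v :=
  exists_recoloring (c.comp (Hom.ofLE (deleteIncidenceSet_mono (deleteIncidenceSet_le ..))))
    fun _ hv hvy =>
      have ⟨hxv, _, hne⟩ := deleteIncidenceSet_adj.1 hv
      hne (color_injOn_neighborSet hH hd c hxv hxy hvy)

theorem kempe_reachable (hH : ¬ H.Colorable n) (hd : (H.neighborSet x).ncard ≤ n)
    (c : (H.deleteIncidenceSet x).Coloring (Fin n)) {u w : V} (hu : H.Adj x u) (hw : H.Adj x w) :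
    (restrict (H.deleteIncidenceSet x) (c ⁻¹' {c u, c w})).Reachable u w := by
  by_contra huw
  obtain ⟨c', hswap, hkeep⟩ := exists_kempe_swap c (c u) (c w) u
  obtain ⟨v, hv, hvu⟩ := exists_adj_color_eq hH c' (c u)
  have hinj := color_injOn_neighborSet hH hd c
  by_cases huv : (restrict (H.deleteIncidenceSet x) (c ⁻¹' {c u, c w})).Reachable u v
  · have hvw : c v = c w := by
      rw [hswap v huv] at hvu
      simpa using congrArg (Equiv.swap (c u) (c w)) hvu
    exact huw (hinj hv hw hvw ▸ huv)
  · exact huv (hinj hv hu (hkeep v huv ▸ hvu) ▸ .rfl)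

/-- The spanning subgraph of `H` on the uncoloured vertex `x` and the vertices coloured `i` or
`j` by a colouring `c` of `H` off `x`. -/
abbrev chain (c : (H.deleteIncidenceSet x).Coloring (Fin n)) (i j : Fin n) : SimpleGraph V :=
  restrict H (insert x (c ⁻¹' {i, j}))

theorem exists_coloring_of_reachable (hH : ¬ H.Colorable n)
    (hd : ∀ v, H.Reachable x v → (H.neighborSet v).ncard ≤ n)
    (c : (H.deleteIncidenceSet x).Coloring (Fin n)) {i j : Fin n} {y : V}
    (hy : (chain c i j).Reachable x y) :
    ∃ c' : (H.deleteIncidenceSet y).Coloring (Fin n),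
      insert y (c' ⁻¹' {i, j}) = insert x (c ⁻¹' {i, j}) := by
  refine reachable_induction (P := fun y => ∃ c' : (H.deleteIncidenceSet y).Coloring (Fin n),
    insert y (c' ⁻¹' {i, j}) = insert x (c ⁻¹' {i, j})) ⟨c, rfl⟩ (fun y z hy hyz => ?_) hy
  rintro ⟨c₁, hc₁⟩
  obtain ⟨hyz, -, hz⟩ := restrict_adj.1 hyz
  obtain ⟨c₂, hc₂y, hc₂⟩ := exists_coloring_shift hH (hd y (hy.mono restrict_le)) c₁ hyz
  refine ⟨c₂, hc₁ ▸ Set.ext fun v => ?_⟩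
  rw [← hc₁, Set.mem_insert_iff, Set.mem_preimage] at hz
  simp only [Set.mem_insert_iff, Set.mem_preimage] at hz ⊢
  grind [hyz.ne]

theorem ncard_neighborSet_chain (hH : ¬ H.Colorable n)
    (hd : ∀ v, H.Reachable x v → (H.neighborSet v).ncard ≤ n)
    (c : (H.deleteIncidenceSet x).Coloring (Fin n)) {i j : Fin n} (hij : i ≠ j) {y : V}
    (hy : (chain c i j).Reachable x y) : ((chain c i j).neighborSet y).ncard = 2 := by
  obtain ⟨c', hc'⟩ := exists_coloring_of_reachable hH hd c hy
  obtain ⟨u, hu, rfl⟩ := exists_adj_color_eq hH c' i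
  obtain ⟨w, hw, rfl⟩ := exists_adj_color_eq hH c' j
  have hinj := color_injOn_neighborSet hH (hd y (hy.mono restrict_le)) c'
  have hN : (chain c (c' u) (c' w)).neighborSet y = {u, w} := by
    ext v
    rw [mem_neighborSet, restrict_adj, ← hc']
    constructor
    · rintro ⟨hv, -, rfl | hvu | hvw⟩
      · exact (hv.ne rfl).elim
      · exact .inl (hinj hv hu hvu)
      · exact .inr (hinj hv hw hvw)
    · rintro (rfl | rfl) <;> simp [hu, hw]
  rw [hN, Set.ncard_pair (fun h => hij (congrArg c' h))]

theorem exists_forall_color_ne (c : V → Fin n) {N : Set V} (hN : N.ncard < n) :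
    ∃ m, ∀ v ∈ N, c v ≠ m := by
  by_contra! hall
  have hsurj : c '' N = Set.univ := Set.eq_univ_of_forall hall
  have hle := Set.ncard_image_le (f := c) N.toFinite
  rw [hsurj, Set.ncard_univ, Nat.card_fin] at hle
  lia

theorem exists_color_ne_of_two_repeats (c : V → Fin n) {N : Set V} (hN : N.ncard ≤ n)
    {a a' b b' : V} (ha : a ∈ N) (ha' : a' ∈ N) (hb : b ∈ N) (hb' : b' ∈ N) (hab : a ≠ b)
    (hab' : a' ≠ b') (hc : c a = c b) (hc' : c a' = c b') (hne : c a ≠ c a') (u : V) :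
    ∃ m ≠ c u, ∀ v ∈ N, c v ≠ m := by
  have hsub : ({a, a'} : Set V) ⊆ N := Set.insert_subset ha (Set.singleton_subset_iff.2 ha')
  have hcard : (insert u (N \ {a, a'})).ncard < n := by
    have h₁ := Set.ncard_sdiff_add_ncard_of_subset hsub
    rw [Set.ncard_pair (fun h => hne (congrArg c h))] at h₁
    have h₂ := Set.ncard_insert_le u (N \ {a, a'})
    lia
  obtain ⟨m, hm⟩ := exists_forall_color_ne c hcard
  refine ⟨m, (hm u (.inl rfl)).symm, fun v hv => ?_⟩
  grind

theorem exists_color_pair_of_mem_chain (hH : ¬ H.Colorable n)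
    (hd : ∀ v, H.Reachable x v → (H.neighborSet v).ncard ≤ n)
    (c : (H.deleteIncidenceSet x).Coloring (Fin n)) {i j : Fin n} (hij : i ≠ j) {u : V}
    (hux : ¬ H.Adj x u) (hne : u ≠ x) (hui : c u = i) (hu : (chain c i j).Reachable x u) :
    ∃ a b, a ≠ b ∧ H.Adj u a ∧ H.Adj u b ∧ c a = j ∧ c b = j := by
  have hj {v : V} (hv : (chain c i j).Adj u v) : H.Adj u v ∧ c v = j := by
    obtain ⟨huv, -, hvx | hvi | hvj⟩ := restrict_adj.1 hv
    · exact (hux (hvx ▸ huv.symm)).elim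
    · have hvx : v ≠ x := fun h => hux (h ▸ huv.symm)
      exact (c.valid (deleteIncidenceSet_adj.2 ⟨huv, hne, hvx⟩) (hui.trans hvi.symm)).elim
    · exact ⟨huv, hvj⟩
  obtain ⟨a, b, hab, hN⟩ := Set.ncard_eq_two.1 (ncard_neighborSet_chain hH hd c hij hu)
  have ha : a ∈ (chain c i j).neighborSet u := hN ▸ .inl rfl
  have hb : b ∈ (chain c i j).neighborSet u := hN ▸ .inr rfl
  exact ⟨a, b, hab, (hj ha).1, (hj hb).1, (hj ha).2, (hj hb).2⟩

theorem adj_of_mem_two_chains (hH : ¬ H.Colorable n)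
    (hd : ∀ v, H.Reachable x v → (H.neighborSet v).ncard ≤ n)
    (c : (H.deleteIncidenceSet x).Coloring (Fin n)) {i j l : Fin n} (hij : i ≠ j) (hil : i ≠ l)
    (hjl : j ≠ l) {u : V} (hne : u ≠ x) (hui : c u = i) (huj : (chain c i j).Reachable x u)
    (hul : (chain c i l).Reachable x u) : H.Adj x u := by
  by_contra hux
  obtain ⟨a, b, hab, ha, hb, haj, hbj⟩ :=
    exists_color_pair_of_mem_chain hH hd c hij hux hne hui huj
  obtain ⟨a', b', hab', ha', hb', hal, hbl⟩ :=
    exists_color_pair_of_mem_chain hH hd c hil hux hne hui hul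
  obtain ⟨m, hmi, hm⟩ := exists_color_ne_of_two_repeats (N := H.neighborSet u) c
    (hd u (huj.mono restrict_le)) ha ha' hb hb' hab hab' (haj.trans hbj.symm)
    (hal.trans hbl.symm) (by rwa [haj, hal]) u
  rw [hui] at hmi
  have hmj : m ≠ j := fun h => hm a ha (haj.trans h.symm)
  obtain ⟨c', hc'u, hc'⟩ := exists_recoloring
    (c.comp (Hom.ofLE (deleteIncidenceSet_le (H.deleteIncidenceSet x) u)))
    fun v hv => hm v (deleteIncidenceSet_le _ _ hv)
  have hu : u ∉ insert x (c' ⁻¹' {i, j}) := by simp [hne, hc'u, hmi, hmj]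
  have hle : chain c' i j ≤ chain c i j := restrict_mono le_rfl fun v hv => by
    rcases eq_or_ne v u with rfl | hvu
    · exact (hu hv).elim
    · simpa [hc' v hvu] using hv
  have hreach : (chain c' i j).Reachable x u := reachable_of_ncard_neighborSet_le hle
    (fun y hy => (ncard_neighborSet_chain hH hd c hij (hy.mono hle)).trans
      (ncard_neighborSet_chain hH hd c' hij hy).symm |>.le) huj
  exact hu (mem_of_restrict_reachable hreach (.inl rfl))

theorem exists_next_in_chain (hH : ¬ H.Colorable n)
    (hd : ∀ v, H.Reachable x v → (H.neighborSet v).ncard ≤ n)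
    (c : (H.deleteIncidenceSet x).Coloring (Fin n)) {v w : V} (hv : H.Adj x v) (hw : H.Adj x w)
    (hne : v ≠ w) (hvw : ¬ H.Adj v w) :
    ∃ u ≠ x, H.Adj v u ∧ ¬ H.Adj x u ∧ c u = c w ∧
      ∀ y ≠ x, (chain c (c v) (c w)).Adj v y → y = u := by
  have hinj := color_injOn_neighborSet hH (hd x .rfl) c
  have hxv : (chain c (c v) (c w)).Adj x v := restrict_adj.2 ⟨hv, by simp⟩
  have hdeg := ncard_neighborSet_chain hH hd c (hinj.ne hv hw hne) hxv.reachable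
  obtain ⟨u, hu, hux⟩ := Set.exists_ne_of_one_lt_ncard hdeg.ge x
  obtain ⟨hvu, -, hcu⟩ := restrict_adj.1 hu
  have hcu : c u = c w := by
    have hcvu := c.valid (deleteIncidenceSet_adj.2 ⟨hvu, hv.ne', hux⟩)
    exact (hcu.resolve_left hux).resolve_left hcvu.symm
  have hN : {x, u} = (chain c (c v) (c w)).neighborSet v :=
    Set.eq_of_subset_of_ncard_le (Set.insert_subset hxv.symm (Set.singleton_subset_iff.2 hu))
      (by rw [hdeg, Set.ncard_pair hux.symm])
  refine ⟨u, hux, hvu, fun hxu => hvw (hinj hxu hw hcu ▸ hvu), hcu, fun y hyx hy => ?_⟩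
  exact ((hN.symm ▸ hy : y ∈ ({x, u} : Set V))).resolve_left hyx

theorem reachable_chain_of_kempe_swap (hH : ¬ H.Colorable n)
    (hd : ∀ v, H.Reachable x v → (H.neighborSet v).ncard ≤ n)
    (c c' : (H.deleteIncidenceSet x).Coloring (Fin n)) {u v w : V} {l : Fin n} (hv : H.Adj x v)
    (hw : H.Adj x w) (hvw : c v ≠ c w) (hlv : l ≠ c v) (hlw : l ≠ c w)
    (hu : ∀ y ≠ x, (chain c (c v) (c w)).Adj v y → y = u)
    (hc'w : ∀ y, c y = c w → c' y = c w)
    (hkeep : ∀ y, ¬ (restrict (H.deleteIncidenceSet x) (c ⁻¹' {c v, l})).Reachable v y →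
      c' y = c y) :
    (chain c' (c w) (c v)).Reachable x u ∨ (chain c' (c w) (c v)).Reachable x v := by
  refine or_iff_not_imp_left.2 fun hxu => And.left <| reachable_induction (P := fun y =>
    (chain c' (c w) (c v)).Reachable x y ∧ (chain c (c v) (c w)).Reachable x y)
    ⟨Adj.reachable (restrict_adj.2 ⟨hw, .inl rfl, .inr (.inl (hc'w w rfl))⟩),
      Adj.reachable (restrict_adj.2 ⟨hw, .inl rfl, .inr (.inr rfl)⟩)⟩ ?_
    (kempe_reachable hH (hd x .rfl) c hw hv)
  rintro y z - hyz ⟨hy', hy⟩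
  obtain ⟨hyz, hcy, hcz⟩ := restrict_adj.1 hyz
  obtain ⟨hyz, hyx, hzx⟩ := deleteIncidenceSet_adj.1 hyz
  have hyz' : (chain c (c v) (c w)).Adj y z :=
    restrict_adj.2 ⟨hyz, .inr hcy.symm, .inr hcz.symm⟩
  have hz := hy.trans hyz'.reachable
  suffices hc'z : c' z = c w ∨ c' z = c v from
    ⟨hy'.trans (Adj.reachable (restrict_adj.2
      ⟨hyz, mem_of_restrict_reachable hy' (.inl rfl), .inr hc'z⟩)), hz⟩
  refine hcz.imp (hc'w z) fun hcz => (hkeep z fun hvz => ?_).trans hcz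
  have hzl : (chain c (c v) l).Reachable x z :=
    (Adj.reachable (restrict_adj.2 ⟨hv, .inl rfl, .inr (.inl rfl)⟩)).trans
      (hvz.mono (restrict_mono (deleteIncidenceSet_le ..) (Set.subset_insert ..)))
  have hxz := adj_of_mem_two_chains hH hd c hvw hlv.symm hlw.symm hzx hcz hz hzl
  obtain rfl := color_injOn_neighborSet hH (hd x .rfl) c hxz hv hcz
  exact hxu (hu y hyx hyz'.symm ▸ hy')

-- If `v` and `w` were not adjacent, the vertex `u` following `v` on the chain from `v` to `w`
-- would lie on two chains through `x` after a swap at `v`, hence be a second neighbour of `x`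
-- with the colour of `w`.
theorem isClique_neighborSet (hn : 3 ≤ n) (hH : ¬ H.Colorable n)
    (hd : ∀ v, H.Reachable x v → (H.neighborSet v).ncard ≤ n)
    (hx : (H.deleteIncidenceSet x).Colorable n) : H.IsClique (H.neighborSet x) := by
  obtain ⟨c⟩ := hx
  intro v hv w hw hne
  by_contra hvw
  have hcvw : c v ≠ c w := (color_injOn_neighborSet hH (hd x .rfl) c).ne hv hw hne
  obtain ⟨l, hlv, hlw⟩ := Fin.exists_ne_and_ne_of_two_lt (c v) (c w) hn
  obtain ⟨u, hux, hvu, hxu, hcu, hu⟩ := exists_next_in_chain hH hd c hv hw hne hvw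
  obtain ⟨c', hswap, hkeep⟩ := exists_kempe_swap c (c v) l v
  have hc'v : c' v = l := by rw [hswap v .rfl, Equiv.swap_apply_left]
  have hc'w (y : V) (hy : c y = c w) : c' y = c w := by
    by_cases hvy : (restrict (H.deleteIncidenceSet x) (c ⁻¹' {c v, l})).Reachable v y
    · rw [hswap y hvy, hy, Equiv.swap_apply_of_ne_of_ne hcvw.symm hlw.symm]
    · rw [hkeep y hvy, hy]
  have hwl : (chain c' (c w) l).Reachable x u :=
    .trans (Adj.reachable (restrict_adj.2 ⟨hv, .inl rfl, .inr (.inr hc'v)⟩))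
      (Adj.reachable (restrict_adj.2 ⟨hvu, .inr (.inr hc'v), .inr (.inl (hc'w u hcu))⟩))
  rcases reachable_chain_of_kempe_swap hH hd c c' hv hw hcvw hlv hlw hu hc'w hkeep with hwv | hxv
  · exact hxu (adj_of_mem_two_chains hH hd c' hcvw.symm hlw.symm hlv.symm hux (hc'w u hcu) hwv hwl)
  · have hmem := mem_of_restrict_reachable hxv (.inl rfl)
    simp [hv.ne', hc'v, hlv, hlw] at hmem

theorem isClique_setOf_reachable (hn : 3 ≤ n) (hH : ¬ H.Colorable n)
    (hd : ∀ v, H.Reachable x v → (H.neighborSet v).ncard ≤ n)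
    (hx : (H.deleteIncidenceSet x).Colorable n) : H.IsClique {z | H.Reachable x z} := by
  have hN (y : V) (hy : H.Reachable x y) : H.IsClique (H.neighborSet y) := by
    refine isClique_neighborSet hn hH (fun v hv => hd v (hy.trans hv)) ?_
    refine reachable_induction (P := fun y => (H.deleteIncidenceSet y).Colorable n) hx
      (fun y z hy hyz ⟨c⟩ => ?_) hy
    exact ⟨(exists_coloring_shift hH (hd y hy) c hyz).choose⟩
  intro y hy z hz hyz
  refine (reachable_induction (P := fun z => z = y ∨ H.Adj y z) (.inl rfl) ?_
    (hy.symm.trans hz)).resolve_left hyz.symm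
  rintro z w hz hzw (rfl | hyz)
  · exact .inr hzw
  · exact or_iff_not_imp_left.2 fun hwy => hN z (hy.trans hz) hyz.symm hzw (Ne.symm hwy)

end Brooks

section Partitions

variable {V ι : Type*} {G : SimpleGraph V} {u v x : V}

/-- The class `i` of the vertex partition `p`, as a spanning subgraph of `G`. -/
abbrev side (G : SimpleGraph V) (p : V → ι) (i : ι) : SimpleGraph V := restrict G (p ⁻¹' {i})

theorem side_adj {p : V → ι} {i : ι} : (side G p i).Adj u v ↔ G.Adj u v ∧ p u = i ∧ p v = i :=
  restrict_adj

theorem eq_of_side_reachable {p : V → ι} {i : ι} (h : (side G p i).Reachable u v) (hu : p u = i) :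
    p v = i :=
  mem_of_restrict_reachable (s := p ⁻¹' {i}) h hu

theorem deleteIncidenceSet_side (p : V → ι) (i : ι) :
    (side G p i).deleteIncidenceSet x = side (G.deleteIncidenceSet x) p i := by
  ext u v
  simp only [deleteIncidenceSet_adj, side_adj]
  tauto

theorem deleteIncidenceSet_side_of_ne {p : V → ι} {i : ι} (h : p x ≠ i) :
    (side G p i).deleteIncidenceSet x = side G p i := by
  ext u v
  simp only [deleteIncidenceSet_adj, side_adj]
  grind

variable [Fintype ι] {r : ι → ℕ}

theorem colorable_sum_of_sides {p : V → ι} (h : ∀ i, (side G p i).Colorable (r i)) :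
    G.Colorable (∑ i, r i) := by
  let c (i : ι) : (side G p i).Coloring (Fin (r i)) := (h i).some
  have C : G.Coloring (Σ i, Fin (r i)) :=
    Coloring.mk (fun v => ⟨p v, c (p v) v⟩) fun {u v} huv h => by
      obtain ⟨hp, hc⟩ := Sigma.mk.inj_iff.1 h
      refine (c (p v)).valid (side_adj.2 ⟨huv, hp, rfl⟩) ?_
      rw [hp] at hc
      exact eq_of_heq hc
  simpa using C.colorable

theorem exists_sides_colorable (hr : ∀ i, 0 < r i) (h : G.Colorable (∑ i, r i)) :
    ∃ p : V → ι, ∀ i, (side G p i).Colorable (r i) := by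
  classical
  let c : G.Coloring (Σ i, Fin (r i)) := h.toColoring (by simp)
  refine ⟨fun v => (c v).1, fun i => ⟨Coloring.mk
    (fun v => if h : (c v).1 = i then h ▸ (c v).2 else ⟨0, hr i⟩) fun {u v} huv h => ?_⟩⟩
  obtain ⟨huv, hu, hv⟩ := side_adj.1 huv
  refine c.valid huv (Sigma.ext (hu.trans hv.symm) ?_)
  grind

end Partitions

section Toggle

variable {V : Type*} {G : SimpleGraph V} {x v : V} {p : V → Bool} {i : Bool}

open Classical in
/-- The partition obtained from `p` by moving the vertex `x` to the other class. -/
noncomputable def toggle (x : V) (p : V → Bool) : V → Bool := Function.update p x !p x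

@[simp]
theorem toggle_self : toggle x p x = !p x := by simp [toggle]

theorem toggle_of_ne (h : v ≠ x) : toggle x p v = p v := by simp [toggle, h]

@[simp]
theorem toggle_toggle : toggle x (toggle x p) = p := by
  ext v
  rcases eq_or_ne v x with rfl | h
  · simp
  · simp only [toggle_of_ne h]

theorem toggle_eq_iff (h : p x = i) : toggle x p v = i ↔ p v = i ∧ v ≠ x := by
  rcases eq_or_ne v x with rfl | hv
  · simp [h]
  · simp [toggle_of_ne hv, hv]

theorem deleteIncidenceSet_side_toggle (i : Bool) :
    (side G (toggle x p) i).deleteIncidenceSet x = (side G p i).deleteIncidenceSet x := by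
  ext u v
  simp only [deleteIncidenceSet_adj, side_adj]
  grind [toggle_of_ne]

theorem side_toggle_eq_deleteIncidenceSet (h : p x = i) :
    side G (toggle x p) i = (side G p i).deleteIncidenceSet x := by
  rw [← deleteIncidenceSet_side_toggle, deleteIncidenceSet_side_of_ne]
  simp [h]

theorem side_toggle_le (h : p x = i) : side G (toggle x p) i ≤ side G p i := by
  rw [side_toggle_eq_deleteIncidenceSet h]
  exact deleteIncidenceSet_le ..

theorem side_le_toggle (h : p x ≠ i) : side G p i ≤ side G (toggle x p) i := by
  rw [← deleteIncidenceSet_side_of_ne h, ← deleteIncidenceSet_side_toggle]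
  exact deleteIncidenceSet_le ..

theorem side_toggle_adj_iff (h : p x ≠ i) :
    (side G (toggle x p) i).Adj x v ↔ G.Adj x v ∧ p v = i := by
  rw [side_adj, toggle_self, ← Bool.eq_not.2 h.symm]
  refine and_congr_right fun hxv => ?_
  simp [toggle_of_ne hxv.ne']

theorem ncard_neighborSet_eq_add_toggle [Finite V] (G : SimpleGraph V) (x : V) (p : V → Bool) :
    (G.neighborSet x).ncard = ((side G p (p x)).neighborSet x).ncard +
      ((side G (toggle x p) (!p x)).neighborSet x).ncard := by
  rw [← Set.ncard_union_eq]
  · congr 1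
    ext v
    simp only [mem_neighborSet, Set.mem_union, side_adj, toggle_self, true_and]
    rcases eq_or_ne v x with rfl | h
    · simp
    · rw [toggle_of_ne h]
      cases p v <;> cases p x <;> simp
  · rw [Set.disjoint_left]
    intro v hv hv'
    obtain ⟨h, -, hv⟩ := side_adj.1 hv
    obtain ⟨-, -, hv'⟩ := side_adj.1 hv'
    simp [toggle_of_ne h.ne', hv] at hv'

theorem ncard_edgeSet_deleteIncidenceSet_add [Finite V] (G : SimpleGraph V) (x : V) :
    (G.deleteIncidenceSet x).edgeSet.ncard + (G.neighborSet x).ncard = G.edgeSet.ncard := by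
  classical
  have := Fintype.ofFinite V
  have hcard := G.card_edgeFinset_deleteIncidenceSet x
  have hle := G.degree_le_card_edgeFinset x
  simp only [← coe_edgeFinset, ← coe_neighborFinset, Set.ncard_coe_finset,
    card_neighborFinset_eq_degree]
  lia

/-- The number of edges inside the classes of `p` that avoid the uncoloured vertex `x`. -/
noncomputable def potential (G : SimpleGraph V) (x : V) (p : V → Bool) : ℕ :=
  ((G \ (completeGraph Bool).comap p).deleteIncidenceSet x).edgeSet.ncard

theorem potential_toggle : potential G x (toggle x p) = potential G x p := by
  unfold potential
  congr 2
  ext u v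
  simp only [deleteIncidenceSet_adj, sdiff_adj, comap_adj, top_adj]
  grind [toggle_of_ne]

theorem potential_add_ncard_neighborSet [Finite V] (G : SimpleGraph V) (x : V) (p : V → Bool) :
    potential G x p + ((side G p (p x)).neighborSet x).ncard =
      (G \ (completeGraph Bool).comap p).edgeSet.ncard := by
  have hN : (side G p (p x)).neighborSet x = (G \ (completeGraph Bool).comap p).neighborSet x := by
    ext v
    simp [eq_comm]
  rw [hN, potential, ncard_edgeSet_deleteIncidenceSet_add]

end Toggle

section MinimalPartitions

variable {V : Type*} {G : SimpleGraph V} {r : Bool → ℕ} {x y : V} {p : V → Bool}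

/-- With the vertex `x` left uncoloured, the class `i` of `p` can be coloured with `r i` colours. -/
def IsValidAt (G : SimpleGraph V) (r : Bool → ℕ) (x : V) (p : V → Bool) : Prop :=
  ∀ i, ((side G p i).deleteIncidenceSet x).Colorable (r i)

/-- The pair `(x, p)` minimizes the potential among all valid pairs. -/
structure IsMinimalAt (G : SimpleGraph V) (r : Bool → ℕ) (x : V) (p : V → Bool) : Prop where
  valid : IsValidAt G r x p
  le : ∀ y q, IsValidAt G r y q → potential G x p ≤ potential G y q

protected theorem IsValidAt.toggle (h : IsValidAt G r x p) : IsValidAt G r x (toggle x p) :=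
  fun i => (deleteIncidenceSet_side_toggle i).symm ▸ h i

protected theorem IsMinimalAt.toggle (h : IsMinimalAt G r x p) : IsMinimalAt G r x (toggle x p) :=
  ⟨h.valid.toggle, potential_toggle.symm ▸ h.le⟩

theorem IsValidAt.not_colorable (hG : ¬ G.Colorable (∑ i, r i)) (h : IsValidAt G r x p) :
    ¬ (side G p (p x)).Colorable (r (p x)) := by
  refine fun hx => hG (colorable_sum_of_sides (p := p) fun i => ?_)
  rcases eq_or_ne (p x) i with rfl | hi
  · exact hx
  · exact deleteIncidenceSet_side_of_ne (G := G) hi ▸ h i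

variable [Finite V]

theorem exists_isMinimalAt (h : IsValidAt G r x p) : ∃ y q, IsMinimalAt G r y q := by
  obtain ⟨⟨y, q⟩, hyq, hmin⟩ := Set.exists_min_image
    {a : V × (V → Bool) | IsValidAt G r a.1 a.2} (fun a => potential G a.1 a.2)
    (Set.toFinite _) ⟨(x, p), h⟩
  exact ⟨y, q, hyq, fun z q' h => hmin (z, q') h⟩

theorem IsValidAt.le_ncard (hG : ¬ G.Colorable (∑ i, r i)) (h : IsValidAt G r x p) :
    r (p x) ≤ ((side G p (p x)).neighborSet x).ncard :=
  le_ncard_neighborSet (h.not_colorable hG) (h _)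

theorem IsValidAt.of_adj (hG : ¬ G.Colorable (∑ i, r i)) (h : IsValidAt G r x p)
    (hd : ((side G p (p x)).neighborSet x).ncard ≤ r (p x)) (hxy : (side G p (p x)).Adj x y) :
    IsValidAt G r y p := by
  intro i
  obtain ⟨c⟩ := h i
  rcases eq_or_ne (p x) i with rfl | hi
  · exact ⟨(exists_coloring_shift (h.not_colorable hG) hd c hxy).choose⟩
  · rw [deleteIncidenceSet_side_of_ne hi] at c
    rw [deleteIncidenceSet_side_of_ne ((side_adj.1 hxy).2.2.trans_ne hi)]
    exact ⟨c⟩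

theorem IsMinimalAt.of_adj (hG : ¬ G.Colorable (∑ i, r i)) (h : IsMinimalAt G r x p)
    (hd : ((side G p (p x)).neighborSet x).ncard = r (p x)) (hxy : (side G p (p x)).Adj x y) :
    IsMinimalAt G r y p ∧ ((side G p (p y)).neighborSet y).ncard = r (p y) := by
  have hy := h.valid.of_adj hG hd.le hxy
  have hle := hy.le_ncard hG
  have hpot := h.le y p hy
  have hx' := potential_add_ncard_neighborSet G x p
  have hy' := potential_add_ncard_neighborSet G y p
  have hpy : p y = p x := (side_adj.1 hxy).2.2
  rw [hpy] at hle hy' ⊢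
  exact ⟨⟨hy, fun z q hz => le_trans (by lia) (h.le z q hz)⟩, by lia⟩

theorem IsMinimalAt.of_reachable (hG : ¬ G.Colorable (∑ i, r i)) (h : IsMinimalAt G r x p)
    (hd : ((side G p (p x)).neighborSet x).ncard = r (p x))
    (hxy : (side G p (p x)).Reachable x y) :
    IsMinimalAt G r y p ∧ ((side G p (p x)).neighborSet y).ncard = r (p x) := by
  suffices h : IsMinimalAt G r y p ∧ ((side G p (p y)).neighborSet y).ncard = r (p y) from
    eq_of_side_reachable hxy rfl ▸ h
  refine reachable_induction (P := fun y => IsMinimalAt G r y p ∧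
    ((side G p (p y)).neighborSet y).ncard = r (p y)) ⟨h, hd⟩ (fun y z _ hyz ih => ?_) hxy
  exact ih.1.of_adj hG ih.2 ((side_adj.1 hyz).2.1 ▸ hyz)

theorem sum_eq_add_not (r : Bool → ℕ) (i : Bool) : ∑ j, r j = r i + r !i := by
  cases i <;> simp [add_comm]

theorem IsMinimalAt.ncard_eq (hG : ¬ G.Colorable (∑ i, r i)) (h : IsMinimalAt G r x p)
    (hx : (G.neighborSet x).ncard ≤ ∑ i, r i) :
    ((side G p (p x)).neighborSet x).ncard = r (p x) := by
  have hle := h.valid.le_ncard hG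
  have hle' := h.toggle.valid.le_ncard hG
  rw [toggle_self] at hle'
  rw [ncard_neighborSet_eq_add_toggle G x p, sum_eq_add_not r (p x)] at hx
  lia

theorem IsMinimalAt.exists_ncard_eq (hG : ¬ G.Colorable (∑ i, r i)) (h : IsMinimalAt G r x p)
    (hx : (G.neighborSet x).ncard ≤ ∑ i, r i + 1) :
    ∃ q, IsMinimalAt G r x q ∧ ((side G q (q x)).neighborSet x).ncard = r (q x) := by
  by_cases hd : ((side G p (p x)).neighborSet x).ncard = r (p x)
  · exact ⟨p, h, hd⟩
  have hle := h.valid.le_ncard hG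
  have hle' := h.toggle.valid.le_ncard hG
  refine ⟨_, h.toggle, ?_⟩
  rw [toggle_self] at hle' ⊢
  rw [ncard_neighborSet_eq_add_toggle G x p, sum_eq_add_not r (p x)] at hx
  lia

end MinimalPartitions

section GoodPartitions

variable {V : Type*} {G : SimpleGraph V} {s : ℕ} {x y a b d e u w z : V} {p : V → Bool} {i : Bool}

/-- The vertex `v` has degree `s + 2`, the least possible one in a critical graph of chromatic
number `s + 3`. -/
def IsLow (G : SimpleGraph V) (s : ℕ) (v : V) : Prop := (G.neighborSet v).ncard = s + 2

/-- `G` is a critical graph of chromatic number `s + 3` and of maximum degree at most `s + 3`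
in which the vertices that are not low are independent. -/
structure HighIndepCritical (G : SimpleGraph V) (s : ℕ) : Prop where
  three_le : 3 ≤ s
  not_colorable : ¬ G.Colorable (s + 2)
  colorable_delete : ∀ x, (G.deleteIncidenceSet x).Colorable (s + 2)
  degree_le : ∀ v, (G.neighborSet v).ncard ≤ s + 3
  low_of_adj : ∀ u v, G.Adj u v → IsLow G s u ∨ IsLow G s v

/-- The `s + 2` available colours are split into `s` colours for the class `true` and `2` colours
for the class `false`. -/
def quota (s : ℕ) : Bool → ℕ
  | true => s
  | false => 2

theorem sum_quota : ∑ i, quota s i = s + 2 := by simp [quota]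

/-- `(x, p)` is a minimal pair for the colour split `quota s` whose vertex `x` is low. -/
structure IsGoodAt (G : SimpleGraph V) (s : ℕ) (x : V) (p : V → Bool) : Prop
    extends IsMinimalAt G (quota s) x p where
  low : IsLow G s x

theorem HighIndepCritical.not_colorable_sum_quota (hG : HighIndepCritical G s) :
    ¬ G.Colorable (∑ i, quota s i) :=
  sum_quota (s := s) ▸ hG.not_colorable

protected theorem IsGoodAt.toggle (h : IsGoodAt G s x p) : IsGoodAt G s x (toggle x p) :=
  ⟨h.toIsMinimalAt.toggle, h.low⟩

theorem IsGoodAt.not_colorable (hG : HighIndepCritical G s) (h : IsGoodAt G s x p)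
    (hx : p x = i) : ¬ (side G p i).Colorable (quota s i) :=
  hx ▸ h.valid.not_colorable hG.not_colorable_sum_quota

theorem IsGoodAt.exists_adj_low (hG : HighIndepCritical G s) (h : IsGoodAt G s x p)
    (hx : p x = false) : ∃ u w, (side G p false).Reachable x u ∧ (side G p false).Adj u w ∧
      IsLow G s u ∧ IsLow G s w := by
  classical
  obtain ⟨u, w, hu, huw, hf⟩ := exists_adj_eq_of_not_colorable (n := 2)
    (h.not_colorable hG hx) (h.valid false) fun v => if IsLow G s v then (0 : Fin 2) else 1
  refine ⟨u, w, hu, huw, ?_⟩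
  have := hG.low_of_adj u w (side_adj.1 huw).1
  by_cases hlu : IsLow G s u <;> by_cases hlw : IsLow G s w <;> simp_all

variable [Finite V]

theorem IsGoodAt.move (hG : HighIndepCritical G s) (h : IsGoodAt G s x p) (hx : p x = i)
    (hxy : (side G p i).Reachable x y) (hy : IsLow G s y) : IsGoodAt G s y p := by
  subst hx
  have hd := h.ncard_eq hG.not_colorable_sum_quota (sum_quota (s := s) ▸ h.low.le)
  exact ⟨(h.of_reachable hG.not_colorable_sum_quota hd hxy).1, hy⟩

theorem IsGoodAt.ncard_neighborSet (hG : HighIndepCritical G s) (h : IsGoodAt G s x p)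
    (hx : p x = i) (hxy : (side G p i).Reachable x y) :
    ((side G p i).neighborSet y).ncard = quota s i := by
  subst hx
  have hd := h.ncard_eq hG.not_colorable_sum_quota (sum_quota (s := s) ▸ h.low.le)
  exact (h.of_reachable hG.not_colorable_sum_quota hd hxy).2

theorem exists_isGoodAt (hG : HighIndepCritical G s) : ∃ x p, IsGoodAt G s x p := by
  have : Nonempty V := by
    by_contra hV
    rw [not_nonempty_iff] at hV
    exact hG.not_colorable (.of_isEmpty _)
  obtain ⟨x₀⟩ := this
  obtain ⟨p₀, hp₀⟩ := exists_sides_colorable (r := quota s)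
    (Bool.forall_bool.2 ⟨two_pos, three_pos.trans_le hG.three_le⟩)
    (sum_quota (s := s) ▸ hG.colorable_delete x₀)
  obtain ⟨y, q₀, hy⟩ := exists_isMinimalAt fun i => deleteIncidenceSet_side p₀ i ▸ hp₀ i
  obtain ⟨q, hq, hd⟩ := hy.exists_ncard_eq hG.not_colorable_sum_quota
    (sum_quota (s := s) ▸ hG.degree_le y)
  have hpos : 0 < ((side G q (q y)).neighborSet y).ncard := by
    rw [hd]
    cases q y
    · exact two_pos
    · exact three_pos.trans_le hG.three_le
  obtain ⟨z, hz⟩ := Set.nonempty_of_ncard_ne_zero hpos.ne'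
  rcases hG.low_of_adj y z (side_adj.1 hz).1 with hlow | hlow
  · exact ⟨y, q, hq, hlow⟩
  · exact ⟨z, q, (hq.of_adj hG.not_colorable_sum_quota hd hz).1, hlow⟩

protected theorem IsGoodAt.kempe_reachable (hG : HighIndepCritical G s) (h : IsGoodAt G s x p)
    (hx : p x = i) (hu : (side G p i).Adj x u) (hw : (side G p i).Adj x w) :
    (side G (toggle x p) i).Reachable u w := by
  obtain ⟨c⟩ := h.valid i
  rw [side_toggle_eq_deleteIncidenceSet hx]
  exact (kempe_reachable (h.not_colorable hG hx) (h.ncard_neighborSet hG hx .rfl).le c hu hw).mono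
    restrict_le

theorem IsGoodAt.isClique (hG : HighIndepCritical G s) (h : IsGoodAt G s x p) (hx : p x = true) :
    (side G p true).IsClique {z | (side G p true).Reachable x z} :=
  isClique_setOf_reachable hG.three_le (h.not_colorable hG hx)
    (fun _ hv => (h.ncard_neighborSet hG hx hv).le) (h.valid true)

theorem IsGoodAt.exists_ne_adj (hG : HighIndepCritical G s) (h : IsGoodAt G s x p)
    (hx : p x = false) (hy : (side G p false).Reachable x y) (a : V) :
    ∃ b ≠ a, (side G p false).Adj y b := by
  have hd : _ = 2 := h.ncard_neighborSet hG hx hy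
  obtain ⟨b, hb, hba⟩ := Set.exists_ne_of_one_lt_ncard (one_lt_two.trans_eq hd.symm) a
  exact ⟨b, hba, hb⟩

theorem IsGoodAt.eq_or_eq_of_adj (hG : HighIndepCritical G s) (h : IsGoodAt G s x p)
    (hx : p x = false) (hy : (side G p false).Reachable x y) (hab : a ≠ b)
    (ha : (side G p false).Adj y a) (hb : (side G p false).Adj y b)
    (hz : (side G p false).Adj y z) : z = a ∨ z = b := by
  have hd := h.ncard_neighborSet hG hx hy
  by_contra! hz'
  have hlt : 2 < ((side G p false).neighborSet y).ncard :=
    (Set.two_lt_ncard (Set.toFinite _)).2 ⟨a, ha, b, hb, z, hz, hab, hz'.1.symm, hz'.2.symm⟩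
  exact hlt.ne' hd

theorem IsGoodAt.adj_of_reachable (hG : HighIndepCritical G s) (h : IsGoodAt G s a p)
    (ha : p a = false) (haz : G.Adj a z) (hz : p z = true) (hzd : (side G p true).Reachable z d) :
    G.Adj a d := by
  have hadj : (side G (toggle a p) true).Adj a z :=
    (side_toggle_adj_iff (by simp [ha])).2 ⟨haz, hz⟩
  have hd := eq_of_side_reachable hzd hz
  refine (side_adj.1 (h.toggle.isClique hG (by simp [ha]) .rfl
    (hadj.reachable.trans (hzd.mono (side_le_toggle (by simp [ha])))) ?_)).1
  grind

theorem IsGoodAt.exists_low (hG : HighIndepCritical G s) (h : IsGoodAt G s x p)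
    (hx : p x = true) (a : V) :
    ∃ d, IsLow G s d ∧ d ≠ a ∧ d ≠ x ∧ (side G p true).Reachable x d := by
  have hd : _ = s := h.ncard_neighborSet hG hx .rfl
  have hs := hG.three_le
  have hle := Set.pred_ncard_le_ncard_sdiff_singleton ((side G p true).neighborSet x) a
  obtain ⟨u, ⟨hu, hua⟩, w, ⟨hw, hwa⟩, huw⟩ := (Set.one_lt_ncard (Set.toFinite _)).1
    (show 1 < ((side G p true).neighborSet x \ {a}).ncard by lia)
  rw [mem_neighborSet] at hu hw
  have huw' := h.isClique hG hx hu.reachable hw.reachable huw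
  rcases hG.low_of_adj u w (side_adj.1 huw').1 with hlow | hlow
  · exact ⟨u, hlow, hua, hu.ne', hu.reachable⟩
  · exact ⟨w, hlow, hwa, hw.ne', hw.reachable⟩

theorem IsGoodAt.adj_of_adj_low (hG : HighIndepCritical G s) (h : IsGoodAt G s x p)
    (hx : p x = false) (hd : (side G (toggle x p) true).Reachable x d)
    (hlow : IsLow G s d) (hdx : d ≠ x) (ha : (side G p false).Reachable x a) (hax : a ≠ x)
    (had : G.Adj a d) : G.Adj a x := by
  by_contra hn
  have hqx : toggle x p x = true := by simp [hx]
  have hqd : toggle x p d = true := eq_of_side_reachable hd hqx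
  have hpd : p d = true := by rwa [toggle_of_ne hdx] at hqd
  have hgood := (h.toggle.move hG hqx hd hlow).toggle
  set q := toggle d (toggle x p) with hq
  have hadj {b} (hb : (side G p false).Adj a b) : (side G q false).Adj a b := by
    rw [side_adj] at hb ⊢
    grind +splitImp [toggle_of_ne, toggle_self, G.adj_comm]
  obtain ⟨b, -, hb⟩ := h.exists_ne_adj hG hx ha x
  obtain ⟨b', hb'b, hb'⟩ := h.exists_ne_adj hG hx ha b
  have hqd' : q d = false := by simp [hq, hqd]
  have hda : (side G q false).Adj d a :=
    side_adj.2 ⟨had.symm, hqd', (side_adj.1 (hadj hb)).2.1⟩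
  rcases hgood.eq_or_eq_of_adj hG hqd' hda.reachable hb'b (hadj hb') (hadj hb) hda.symm with
    rfl | rfl
  · simp [(side_adj.1 hb').2.2] at hpd
  · simp [(side_adj.1 hb).2.2] at hpd

theorem IsGoodAt.exists_triangle (hG : HighIndepCritical G s) (h : IsGoodAt G s x p)
    (hx : p x = false) (hd : (side G (toggle x p) true).Reachable x d)
    (hlow : IsLow G s d) (hdx : d ≠ x) (ha : (side G p false).Reachable x a)
    (halow : IsLow G s a) (hax : a ≠ x) (had : G.Adj a d) :
    ∃ e, (side G p false).Adj x a ∧ (side G p false).Adj x e ∧ (side G p false).Adj a e ∧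
      G.Adj d e := by
  have hqx : toggle x p x = true := by simp [hx]
  have hqd : toggle x p d = true := eq_of_side_reachable hd hqx
  have hpd : p d = true := by rwa [toggle_of_ne hdx] at hqd
  have hpa : p a = false := eq_of_side_reachable ha hx
  have hgood := (h.toggle.move hG hqx hd hlow).toggle
  have hqd' : toggle d (toggle x p) d = false := by simp [hqd]
  have hda : (side G (toggle d (toggle x p)) false).Adj d a :=
    (side_toggle_adj_iff (by simp [hqd])).2 ⟨had.symm, by simp [toggle_of_ne hax, hpa]⟩
  obtain ⟨e, hea, hde⟩ := hgood.exists_ne_adj hG hqd' .rfl a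
  have hae := hgood.kempe_reachable hG hqd' hda hde
  rw [toggle_toggle] at hae
  replace hae : (side G p false).Reachable a e := hae.mono (side_toggle_le hx)
  have hpe : p e = false := eq_of_side_reachable hae hpa
  have hex : e ≠ x := by
    intro hex
    exact absurd (side_adj.1 hde).2.2 (by simp [toggle_of_ne hdx.symm, hex, hx])
  replace hde := (side_adj.1 hde).1
  have had' : (side G (toggle a p) true).Adj a d :=
    (side_toggle_adj_iff (by simp [hpa])).2 ⟨had, hpd⟩
  have hax' := h.adj_of_adj_low hG hx hd hlow hdx ha hax had
  have hex' := h.adj_of_adj_low hG hx hd hlow hdx (ha.trans hae) hex hde.symm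
  have hea' := (h.move hG hx ha halow).adj_of_adj_low hG hpa had'.reachable hlow had.ne' hae hea
    hde.symm
  exact ⟨e, side_adj.2 ⟨hax'.symm, hx, hpa⟩, side_adj.2 ⟨hex'.symm, hx, hpe⟩,
    side_adj.2 ⟨hea'.symm, hpa, hpe⟩, hde⟩

theorem neighborSet_subset_insert {T : Set V} (hT : G.IsClique T)
    (hcard : T.ncard = s + 2) (hu : u ∈ T) (hlow : IsLow G s u) (he : e ∉ T) (heu : G.Adj e u) :
    G.neighborSet u ⊆ insert e T := by
  have hsub : insert e (T \ {u}) ⊆ G.neighborSet u :=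
    Set.insert_subset heu.symm fun v hv => hT hu hv.1 (Ne.symm hv.2)
  have hcard' : (insert e (T \ {u})).ncard = s + 2 := by
    rw [Set.ncard_insert_of_notMem (fun h => he h.1), Set.ncard_sdiff_singleton_of_mem hu, hcard]
    rfl
  rw [← Set.eq_of_subset_of_ncard_le hsub (hlow.trans hcard'.symm).le]
  exact Set.insert_subset_insert Set.sdiff_subset

theorem HighIndepCritical.ncard_neighborSet_sdiff_le (hG : HighIndepCritical G s) {T : Set V}
    (hcard : T.ncard = s + 2) (hb : b ∈ T) (hsub : T \ {b} ⊆ G.neighborSet u) :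
    (G.neighborSet u \ T).ncard ≤ 2 := by
  have hle := Set.ncard_le_ncard (Set.sdiff_subset_sdiff_right (Set.sdiff_subset (t := {b})) :
    G.neighborSet u \ T ⊆ G.neighborSet u \ (T \ {b}))
  have hadd := Set.ncard_sdiff_add_ncard_of_subset hsub
  have hdeg := hG.degree_le u
  rw [Set.ncard_sdiff_singleton_of_mem hb, hcard] at hadd
  lia

theorem exists_injOn_eqOn_compl {n : ℕ} {T : Set V} (hcard : T.ncard = n) (hb : b ∈ T)
    (he : e ∉ T) (c : V → Fin n) (m : Fin n) : ∃ f : V → Fin n,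
      T.InjOn f ∧ f b = m ∧ f e = m ∧ (insert e T)ᶜ.EqOn f c := by
  classical
  let σ : T ≃ Fin n := (Finite.equivFinOfCardEq hcard).setValue ⟨b, hb⟩ m
  let f (v : V) : Fin n := if h : v ∈ T then σ ⟨v, h⟩ else if v = e then m else c v
  have hfT {v} (h : v ∈ T) : f v = σ ⟨v, h⟩ := dif_pos h
  refine ⟨f, fun v hv w hw h => ?_, ?_, by simp [f, he], fun v hv => ?_⟩
  · rw [hfT hv, hfT hw] at h
    exact Subtype.mk.inj (σ.injective h)
  · rw [hfT hb]
    exact Equiv.setValue_eq ..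
  · rw [Set.mem_compl_iff, Set.mem_insert_iff, not_or] at hv
    simp [f, hv]

theorem colorable_of_neighborSet_subset_insert {n : ℕ} {T : Set V} (hcard : T.ncard = n)
    (hb : b ∈ T) (he : e ∉ T) (hn : ¬ G.Adj e b)
    (hT : ∀ v ∈ T, v ≠ b → G.neighborSet v ⊆ insert e T) (c : V → Fin n)
    (hc : ∀ v w, G.Adj v w → v ∉ insert e T → w ∉ insert e T → c v ≠ c w) {m : Fin n}
    (hm : ∀ v ∈ G.neighborSet e \ T ∪ G.neighborSet b \ T, c v ≠ m) : G.Colorable n := by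
  obtain ⟨f, hinj, hfb, hfe, hfc⟩ := exists_injOn_eqOn_compl hcard hb he c m
  have hfm {v} (hv : v ∈ T) (h : f v = m) : v = b := hinj hv hb (h.trans hfb.symm)
  have hvalid {v w} (hvw : G.Adj v w) (hv : v ∈ insert e T) : f v ≠ f w := by
    intro h
    by_cases hw : w ∈ insert e T
    · rcases hv with rfl | hv <;> rcases hw with rfl | hw
      · exact hvw.ne rfl
      · exact hn (hfm hw (h.symm.trans hfe) ▸ hvw)
      · exact hn (hfm hv (h.trans hfe) ▸ hvw.symm)
      · exact hvw.ne (hinj hv hw h)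
    · have hwT : w ∉ T := fun h => hw (.inr h)
      rw [hfc hw] at h
      rcases hv with rfl | hv
      · exact hm w (.inl ⟨hvw, hwT⟩) (h.symm.trans hfe)
      · obtain rfl : v = b := by_contra fun hvb => hw (hT v hv hvb hvw)
        exact hm w (.inr ⟨hvw, hwT⟩) (h.symm.trans hfb)
  refine ⟨Coloring.mk f fun {v w} hvw => ?_⟩
  by_cases hv : v ∈ insert e T
  · exact hvalid hvw hv
  by_cases hw : w ∈ insert e T
  · exact (hvalid hvw.symm hw).symm
  rw [hfc hv, hfc hw]
  exact hc v w hvw hv hw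

theorem HighIndepCritical.adj_of_isClique (hG : HighIndepCritical G s) {T : Set V}
    (hT : G.IsClique T) (hcard : T.ncard = s + 2) (hb : b ∈ T) (he : e ∉ T)
    (hlow : ∀ v ∈ T, v ≠ b → IsLow G s v) (hadj : ∀ v ∈ T, v ≠ b → G.Adj e v) : G.Adj e b := by
  by_contra hn
  obtain ⟨c⟩ := hG.colorable_delete b
  have hout : (G.neighborSet e \ T ∪ G.neighborSet b \ T).ncard < s + 2 := by
    have hle := Set.ncard_union_le (G.neighborSet e \ T) (G.neighborSet b \ T)
    have hle_e := hG.ncard_neighborSet_sdiff_le hcard hb fun v hv => hadj v hv.1 hv.2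
    have hle_b := hG.ncard_neighborSet_sdiff_le hcard hb fun v hv => hT hb hv.1 (Ne.symm hv.2)
    have := hG.three_le
    lia
  obtain ⟨m, hm⟩ := exists_forall_color_ne c hout
  have hbe : b ∈ insert e T := .inr hb
  refine hG.not_colorable (colorable_of_neighborSet_subset_insert hcard hb he hn
    (fun v hv hvb => neighborSet_subset_insert hT hcard hv (hlow v hv hvb) he (hadj v hv hvb)) c
    (fun v w hvw hv hw => c.valid (deleteIncidenceSet_adj.2 ⟨hvw, ?_, ?_⟩)) hm)
  · exact fun h => hv (h ▸ hbe)
  · exact fun h => hw (h ▸ hbe)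

theorem HighIndepCritical.not_cliqueFree (hG : HighIndepCritical G s) {T : Set V}
    (hT : G.IsClique T) (hcard : T.ncard = s + 2) (he : e ∉ T)
    (hlow : ∀ v ∈ T, IsLow G s v → G.Adj e v) : ¬ G.CliqueFree (s + 3) := by
  classical
  have := Fintype.ofFinite V
  have hadj : ∀ b ∈ T, G.Adj e b := by
    intro b hb
    by_contra hn
    have hlow' (v) (hv : v ∈ T) (hvb : v ≠ b) : IsLow G s v :=
      (hG.low_of_adj v b (hT hv hb hvb)).resolve_right fun h => hn (hlow b hb h)
    exact hn (hG.adj_of_isClique hT hcard hb he hlow' fun v hv hvb => hlow v hv (hlow' v hv hvb))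
  have hclique : G.IsNClique (s + 2) T.toFinset :=
    ⟨by simpa using hT, by rw [← Set.ncard_eq_toFinset_card', hcard]⟩
  exact fun hfree => hfree _ (hclique.insert fun v hv => hadj v (by simpa using hv))

theorem IsGoodAt.ncard_setOf_reachable (hG : HighIndepCritical G s) (h : IsGoodAt G s x p)
    (hx : p x = true) : {v | (side G p true).Reachable x v}.ncard = s + 1 := by
  have hD : {v | (side G p true).Reachable x v} = insert x ((side G p true).neighborSet x) := by
    ext v
    refine ⟨fun hv => ?_, ?_⟩
    · exact or_iff_not_imp_left.2 fun hvx => h.isClique hG hx .rfl hv (Ne.symm hvx)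
    · rintro (rfl | hv)
      · exact .rfl
      · exact Adj.reachable hv
  rw [hD, Set.ncard_insert_of_notMem (by simp), h.ncard_neighborSet hG hx .rfl]
  rfl

theorem IsGoodAt.adj_of_adj (hG : HighIndepCritical G s) (h : IsGoodAt G s x p)
    (hx : p x = false) (ha : (side G p false).Reachable x a) (halow : IsLow G s a)
    (hz : (side G (toggle x p) true).Reachable x z) (hzx : z ≠ x)
    (haz : G.Adj a z) (hd : (side G (toggle x p) true).Reachable x d)
    (hdx : d ≠ x) : G.Adj a d := by
  have hqx : toggle x p x = true := by simp [hx]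
  have hmem {v} (hv : (side G (toggle x p) true).Reachable x v) (hvx : v ≠ x) :
      p v = true := by
    rw [← toggle_of_ne (p := p) hvx]
    exact eq_of_side_reachable hv hqx
  refine (h.move hG hx ha halow).adj_of_reachable hG (eq_of_side_reachable ha hx) haz
    (hmem hz hzx) ?_
  rcases eq_or_ne z d with rfl | hzd
  · exact .rfl
  · have hadj := (side_adj.1 (h.toggle.isClique hG hqx hz hd hzd)).1
    exact (side_adj.2 ⟨hadj, hmem hz hzx, hmem hd hdx⟩ : (side G p true).Adj z d).reachable

theorem IsGoodAt.not_cliqueFree (hG : HighIndepCritical G s) (h : IsGoodAt G s x p)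
    (hx : p x = false) (ha : (side G p false).Reachable x a) (halow : IsLow G s a) (hax : a ≠ x)
    (hz : (side G (toggle x p) true).Reachable x z) (hzx : z ≠ x)
    (haz : G.Adj a z) : ¬ G.CliqueFree (s + 3) := by
  have hqx : toggle x p x = true := by simp [hx]
  set D := {v | (side G (toggle x p) true).Reachable x v} with hD
  have haD {d} (hd : d ∈ D) (hdx : d ≠ x) : G.Adj a d :=
    h.adj_of_adj hG hx ha halow hz hzx haz hd hdx
  have htriangle {d} (hd : d ∈ D) (hlow : IsLow G s d) (hdx : d ≠ x) :=
    h.exists_triangle hG hx hd hlow hdx ha halow hax (haD hd hdx)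
  obtain ⟨d₀, hlow₀, -, hdx₀, hd₀⟩ := h.toggle.exists_low hG hqx x
  obtain ⟨e, hxa, hxe, hae, -⟩ := htriangle hd₀ hlow₀ hdx₀
  have hD_notMem {v} (hv : (side G p false).Adj x v) : v ∉ D := fun hvD => by
    have := eq_of_side_reachable hvD hqx
    simp [toggle_of_ne hv.ne', (side_adj.1 hv).2.2] at this
  have hclique : G.IsClique (insert a D) :=
    ((h.toggle.isClique hG hqx).mono restrict_le).insert fun d hd _ => by
      rcases eq_or_ne d x with rfl | hdx
      · exact (side_adj.1 hxa).1.symm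
      · exact haD hd hdx
  refine hG.not_cliqueFree (e := e) hclique ?_ ?_ fun v hv hlow => ?_
  · rw [Set.ncard_insert_of_notMem (hD_notMem hxa), h.toggle.ncard_setOf_reachable hG hqx]
  · rintro (rfl | he)
    · exact hae.ne rfl
    · exact hD_notMem hxe he
  · rcases hv with rfl | hv
    · exact (side_adj.1 hae).1.symm
    rcases eq_or_ne v x with rfl | hvx
    · exact (side_adj.1 hxe).1.symm
    obtain ⟨e', -, hxe', hae', hve'⟩ := htriangle hv hlow hvx
    rcases h.eq_or_eq_of_adj hG hx .rfl hae.ne hxa hxe hxe' with rfl | rfl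
    · exact (hae'.ne rfl).elim
    · exact hve'.symm

end GoodPartitions

section MoveSequences

variable {V : Type*} {G : SimpleGraph V} {s : ℕ}

/-- One round of the walk on good pairs. Moving `a` to the class `true` closes a clique there; a
low vertex `b` of this clique is moved back, which closes an odd cycle in the class `false`; the
next round starts from a low vertex `a'` of this cycle that has a low neighbour on it. -/
structure IsRound (G : SimpleGraph V) (s : ℕ) (a : V) (q : V → Bool) (b a' : V) (q' : V → Bool) :
    Prop where
  ne : b ≠ a
  low : IsLow G s b
  mem_clique : (side G (toggle a q) true).Reachable a b
  eq_toggle : q' = toggle b (toggle a q)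
  mem_cycle : (side G q' false).Reachable b a'
  ne' : a' ≠ b
  exists_low : ∃ c, (side G q' false).Adj a' c ∧ IsLow G s c

theorem IsGoodAt.exists_isRound [Finite V] {a : V} {q : V → Bool} (hG : HighIndepCritical G s)
    (h : IsGoodAt G s a q) (ha : q a = false) :
    ∃ b a' q', IsGoodAt G s a' q' ∧ q' a' = false ∧ IsRound G s a q b a' q' := by
  have hqa : toggle a q a = true := by simp [ha]
  obtain ⟨b, hlow, -, hba, hb⟩ := h.toggle.exists_low hG hqa a
  have hgood := (h.toggle.move hG hqa hb hlow).toggle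
  set q' := toggle b (toggle a q) with hq'
  have hqb : q' b = false := by simp [hq', eq_of_side_reachable hb hqa]
  obtain ⟨u, w, hu, huw, hulow, hwlow⟩ := hgood.exists_adj_low hG hqb
  obtain ⟨-, hqu, hqw⟩ := side_adj.1 huw
  have hw := hu.trans huw.reachable
  rcases eq_or_ne u b with rfl | hub
  · exact ⟨u, w, q', hgood.move hG hqb hw hwlow, hqw, hba, hlow, hb, rfl, hw, huw.ne', u, huw.symm,
      hulow⟩
  · exact ⟨b, u, q', hgood.move hG hqb hu hulow, hqu, hba, hlow, hb, rfl, hu, hub, w, huw, hwlow⟩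

/-- An infinite walk on good pairs: the `t`-th round starts with the vertex `a t` and the
partition `q t`, and moves `a t` to the class `true` and `b t` to the class `false`. -/
structure MoveSequence (G : SimpleGraph V) (s : ℕ) (a b : ℕ → V) (q : ℕ → V → Bool) : Prop where
  good : ∀ t, IsGoodAt G s (a t) (q t)
  q_a : ∀ t, q t (a t) = false
  round : ∀ t, IsRound G s (a t) (q t) (b t) (a (t + 1)) (q (t + 1))

theorem exists_moveSequence [Finite V] (hG : HighIndepCritical G s) :
    ∃ a b q, MoveSequence G s a b q := by
  let State := {σ : V × (V → Bool) // IsGoodAt G s σ.1 σ.2 ∧ σ.2 σ.1 = false}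
  have hinit : Nonempty State := by
    obtain ⟨x, p, h⟩ := exists_isGoodAt hG
    cases hp : p x
    · exact ⟨(x, p), h, hp⟩
    · exact ⟨(x, toggle x p), h.toggle, by simp [hp]⟩
  have hround (σ : State) : ∃ b, ∃ σ' : State, IsRound G s σ.1.1 σ.1.2 b σ'.1.1 σ'.1.2 := by
    obtain ⟨b, a', q', hgood, hq', h⟩ := σ.2.1.exists_isRound hG σ.2.2
    exact ⟨b, ⟨(a', q'), hgood, hq'⟩, h⟩
  choose f next hnext using hround
  let σ (t : ℕ) : State := Nat.rec hinit.some (fun _ => next) t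
  exact ⟨fun t => (σ t).1.1, fun t => f (σ t), fun t => (σ t).1.2, fun t => (σ t).2.1,
    fun t => (σ t).2.2, fun t => hnext (σ t)⟩

/-- The partition in the middle of the `t`-th round, when `a t` has been moved. -/
noncomputable abbrev mid (a : ℕ → V) (q : ℕ → V → Bool) (t : ℕ) : V → Bool := toggle (a t) (q t)

/-- The clique closed by moving `a t`. -/
def cliqueAt (G : SimpleGraph V) (a : ℕ → V) (q : ℕ → V → Bool) (t : ℕ) : Set V :=
  {v | (side G (mid a q t) true).Reachable (a t) v}

/-- The odd cycle closed by moving `b t`. -/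
def cycleAt (G : SimpleGraph V) (b : ℕ → V) (q : ℕ → V → Bool) (t : ℕ) : Set V :=
  {v | (side G (q (t + 1)) false).Reachable (b t) v}

namespace MoveSequence

variable {a b : ℕ → V} {q : ℕ → V → Bool} {j l m n t : ℕ} {c d e u v w z : V}

theorem mid_a (W : MoveSequence G s a b q) (t : ℕ) : mid a q t (a t) = true := by
  simp [W.q_a t]

theorem mid_eq_true (W : MoveSequence G s a b q) (hv : v ∈ cliqueAt G a q t) :
    mid a q t v = true :=
  eq_of_side_reachable hv (W.mid_a t)

theorem b_mem_cliqueAt (W : MoveSequence G s a b q) (t : ℕ) : b t ∈ cliqueAt G a q t :=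
  (W.round t).mem_clique

theorem mid_eq_false_iff (W : MoveSequence G s a b q) :
    mid a q t v = false ↔ q t v = false ∧ v ≠ a t :=
  toggle_eq_iff (W.q_a t)

theorem succ_eq_true_iff (W : MoveSequence G s a b q) :
    q (t + 1) v = true ↔ mid a q t v = true ∧ v ≠ b t := by
  rw [(W.round t).eq_toggle, toggle_eq_iff (W.mid_eq_true (W.b_mem_cliqueAt t))]

theorem succ_eq_false (W : MoveSequence G s a b q) (hv : mid a q t v = false) :
    q (t + 1) v = false := by
  by_contra! hv'
  simp [(W.succ_eq_true_iff.1 (Bool.eq_true_of_not_eq_false hv')).1] at hv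

theorem q_b (W : MoveSequence G s a b q) (t : ℕ) : q (t + 1) (b t) = false := by
  simp [← Bool.not_eq_true, W.succ_eq_true_iff]

theorem q_eq_false (W : MoveSequence G s a b q) (hv : v ∈ cycleAt G b q t) :
    q (t + 1) v = false :=
  eq_of_side_reachable hv (W.q_b t)

theorem a_mem_cycleAt (W : MoveSequence G s a b q) (t : ℕ) : a (t + 1) ∈ cycleAt G b q t :=
  (W.round t).mem_cycle

theorem mem_cycleAt_of_adj (W : MoveSequence G s a b q) (hv : v ∈ cycleAt G b q t)
    (hvw : G.Adj v w) (hw : q (t + 1) w = false) : w ∈ cycleAt G b q t :=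
  hv.trans (Adj.reachable (side_adj.2 ⟨hvw, W.q_eq_false hv, hw⟩))

theorem eq_a_of_true (W : MoveSequence G s a b q) (htn : t ≤ n) (ht : q t v = false)
    (hn : q n v = true) : ∃ l, t ≤ l ∧ l < n ∧ v = a l := by
  induction n, htn using Nat.le_induction with
  | base => simp [ht] at hn
  | succ n htn ih =>
    rcases eq_or_ne v (a n) with hv | hv
    · exact ⟨n, htn, n.lt_succ_self, hv⟩
    · obtain ⟨l, htl, hln, hl⟩ := ih ((toggle_of_ne hv).symm.trans (W.succ_eq_true_iff.1 hn).1)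
      exact ⟨l, htl, hln.trans n.lt_succ_self, hl⟩

theorem eq_b_of_false (W : MoveSequence G s a b q) (htn : t ≤ n) (ht : q t v = true)
    (hn : q n v = false) : ∃ l, t ≤ l ∧ l < n ∧ v = b l := by
  induction n, htn using Nat.le_induction with
  | base => simp [ht] at hn
  | succ n htn ih =>
    rcases eq_or_ne v (b n) with hv | hv
    · exact ⟨n, htn, n.lt_succ_self, hv⟩
    · rw [(W.round n).eq_toggle, toggle_of_ne hv] at hn
      obtain ⟨l, htl, hln, hl⟩ := ih (W.mid_eq_false_iff.1 hn).1
      exact ⟨l, htl, hln.trans n.lt_succ_self, hl⟩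

theorem a_ne_b (W : MoveSequence G s a b q) (hD : (Set.Iio m).PairwiseDisjoint (cliqueAt G a q))
    (hC : (Set.Iio n).PairwiseDisjoint (cycleAt G b q)) (hj : j ≤ n) (ht : t < m) :
    a j ≠ b t := by
  intro hab
  rcases lt_or_ge t j with htj | hjt
  · obtain ⟨j, rfl⟩ := Nat.exists_eq_add_one_of_ne_zero (Nat.ne_zero_of_lt htj)
    obtain rfl := hC.elim_set (Set.mem_Iio.2 hj) (Set.mem_Iio.2 (htj.trans_le hj)) _
      (W.a_mem_cycleAt j) (hab ▸ .rfl)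
    exact (W.round j).ne' hab
  · obtain rfl := hD.elim_set (Set.mem_Iio.2 (hjt.trans_lt ht)) (Set.mem_Iio.2 ht) (a j) .rfl
      (hab ▸ W.b_mem_cliqueAt t)
    exact (W.round j).ne hab.symm

theorem q_a_eq_true (W : MoveSequence G s a b q)
    (hD : (Set.Iio n).PairwiseDisjoint (cliqueAt G a q))
    (hC : (Set.Iio m).PairwiseDisjoint (cycleAt G b q)) (hj : j ≤ m) (hjn : j < n) :
    q n (a j) = true := by
  by_contra! hn
  have hj' := W.succ_eq_true_iff.2 ⟨W.mid_a j, W.a_ne_b hD hC hj hjn⟩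
  obtain ⟨l, -, hl, hab⟩ := W.eq_b_of_false hjn hj' (Bool.eq_false_of_not_eq_true hn)
  exact W.a_ne_b hD hC hj hl hab

theorem q_b_eq_false (W : MoveSequence G s a b q)
    (hD : (Set.Iio n).PairwiseDisjoint (cliqueAt G a q))
    (hC : (Set.Iio n).PairwiseDisjoint (cycleAt G b q)) (hjn : j < n) : q n (b j) = false := by
  by_contra! hn
  obtain ⟨l, -, hl, hab⟩ := W.eq_a_of_true hjn (W.q_b j) (Bool.eq_true_of_not_eq_false hn)
  exact W.a_ne_b hD hC hl.le hjn hab.symm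

theorem mid_a_eq_false (W : MoveSequence G s a b q)
    (hD : (Set.Iio n).PairwiseDisjoint (cliqueAt G a q))
    (hC : (Set.Iio n).PairwiseDisjoint (cycleAt G b q)) (hjn : j < n) :
    mid a q j (a n) = false := by
  by_contra! hj
  have hj' := W.succ_eq_true_iff.2 ⟨Bool.eq_true_of_not_eq_false hj, W.a_ne_b hD hC le_rfl hjn⟩
  obtain ⟨l, -, hl, hab⟩ := W.eq_b_of_false hjn hj' (W.q_a n)
  exact W.a_ne_b hD hC le_rfl hl hab

theorem q_eq_true_of_lt (W : MoveSequence G s a b q)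
    (hD : (Set.Iio n).PairwiseDisjoint (cliqueAt G a q)) (hjn : j < n)
    (hv : v ∈ cliqueAt G a q j) (hvb : v ≠ b j) : q n v = true := by
  by_contra! hn
  obtain ⟨l, hl, hln, rfl⟩ := W.eq_b_of_false hjn (W.succ_eq_true_iff.2 ⟨W.mid_eq_true hv, hvb⟩)
    (Bool.eq_false_of_not_eq_true hn)
  obtain rfl := hD.elim_set hjn hln _ hv (W.b_mem_cliqueAt l)
  exact hvb rfl

theorem q_eq_true_of_le (W : MoveSequence G s a b q)
    (hD : (Set.Iio (m + 1)).PairwiseDisjoint (cliqueAt G a q)) (htm : t ≤ m)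
    (hv : v ∈ cliqueAt G a q m) (hva : v ≠ a m) : q t v = true := by
  by_contra! ht
  obtain ⟨l, -, hlm, rfl⟩ := W.eq_a_of_true htm (Bool.eq_false_of_not_eq_true ht)
    ((toggle_of_ne hva).symm.trans (W.mid_eq_true hv))
  exact hlm.ne (hD.elim_set (Set.mem_Iio.2 (by lia)) (Set.mem_Iio.2 (by lia)) (a l) .rfl hv)

theorem q_eq_false_of_lt (W : MoveSequence G s a b q)
    (hC : (Set.Iio m).PairwiseDisjoint (cycleAt G b q)) (hjm : j < m) (hjt : j < t)
    (htm : t ≤ m + 1) (hv : v ∈ cycleAt G b q j) (hva : v ≠ a (j + 1)) : q t v = false := by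
  by_contra! ht
  obtain ⟨l, hjl, hlt, rfl⟩ := W.eq_a_of_true hjt (W.q_eq_false hv)
    (Bool.eq_true_of_not_eq_false ht)
  obtain ⟨l, rfl⟩ := Nat.exists_eq_add_one_of_ne_zero (Nat.ne_zero_of_lt hjl)
  obtain rfl := hC.elim_set (Set.mem_Iio.2 (by lia)) hjm _ (W.a_mem_cycleAt l) hv
  exact hva rfl

theorem mem_cycleAt_of_reachable_mid (W : MoveSequence G s a b q)
    (hC : (Set.Iio (m + 1)).PairwiseDisjoint (cycleAt G b q)) (hjm : j ≤ m)
    (he : (side G (mid a q j) false).Reachable (a (m + 1)) e) : e ∈ cycleAt G b q m := by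
  have cycle_eq {l w} (hl : l < m + 1) (hwl : w ∈ cycleAt G b q l) (hw : w ∈ cycleAt G b q m) :
      l = m := hC.elim_set (Set.mem_Iio.2 hl) (Set.mem_Iio.2 m.lt_succ_self) w hwl hw
  refine reachable_induction (P := (· ∈ cycleAt G b q m)) (W.a_mem_cycleAt m)
    (fun v w _ hvw hv => ?_) he
  obtain ⟨hvw, hqv, hqw⟩ := side_adj.1 hvw
  refine W.mem_cycleAt_of_adj hv hvw ?_
  by_contra! hw
  obtain ⟨l, hjl, hlm, rfl⟩ := W.eq_a_of_true (Nat.succ_le_succ hjm) (W.succ_eq_false hqw)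
    (Bool.eq_true_of_not_eq_false hw)
  obtain ⟨l, rfl⟩ := Nat.exists_eq_add_one_of_ne_zero (Nat.ne_zero_of_lt hjl)
  cases hvl : q (l + 1) v
  · have := cycle_eq (by lia) (W.mem_cycleAt_of_adj (W.a_mem_cycleAt l) hvw.symm hvl) hv
    lia
  · obtain ⟨i, hji, hil, rfl⟩ := W.eq_a_of_true hjl (W.succ_eq_false hqv) hvl
    obtain ⟨i, rfl⟩ := Nat.exists_eq_add_one_of_ne_zero (Nat.ne_zero_of_lt hji)
    have := cycle_eq (by lia) (W.a_mem_cycleAt i) hv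
    lia

theorem mem_cycleAt_of_mid_eq_false (W : MoveSequence G s a b q)
    (hD : (Set.Iio (m + 1)).PairwiseDisjoint (cliqueAt G a q))
    (hC : (Set.Iio m).PairwiseDisjoint (cycleAt G b q)) (hj : j < m) (hv : v ∈ cycleAt G b q j)
    (hva : v ≠ a (j + 1)) (hvw : G.Adj v w) (hw : mid a q m w = false) :
    w ∈ cycleAt G b q j ∧ w ≠ a (j + 1) := by
  have hqw := (W.mid_eq_false_iff.1 hw).1
  refine ⟨W.mem_cycleAt_of_adj hv hvw ?_, ?_⟩
  · by_contra! hqw'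
    obtain ⟨l, hjl, hlm, rfl⟩ := W.eq_b_of_false hj (Bool.eq_true_of_not_eq_false hqw') hqw
    have hvl : v ∈ cycleAt G b q l := W.mem_cycleAt_of_adj .rfl hvw.symm
      (W.q_eq_false_of_lt hC hj (by lia) (by lia) hv hva)
    exact (Nat.lt_of_succ_le hjl).ne' (hC.elim_set hlm hj v hvl hv)
  · rintro rfl
    have := W.succ_eq_false hw
    simp [W.q_a_eq_true hD hC hj (Nat.succ_lt_succ hj)] at this

variable [Finite V]

theorem isGoodAt_mid (hG : HighIndepCritical G s) (W : MoveSequence G s a b q)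
    (hv : v ∈ cliqueAt G a q t) (hlow : IsLow G s v) : IsGoodAt G s v (mid a q t) :=
  (W.good t).toggle.move hG (W.mid_a t) hv hlow

theorem isGoodAt_b (hG : HighIndepCritical G s) (W : MoveSequence G s a b q) (t : ℕ) :
    IsGoodAt G s (b t) (q (t + 1)) :=
  (W.round t).eq_toggle ▸ (W.isGoodAt_mid hG (W.b_mem_cliqueAt t) (W.round t).low).toggle

theorem isClique_cliqueAt (hG : HighIndepCritical G s) (W : MoveSequence G s a b q) (t : ℕ) :
    G.IsClique (cliqueAt G a q t) :=
  ((W.good t).toggle.isClique hG (W.mid_a t)).mono restrict_le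

theorem kempe_reachable_mid (hG : HighIndepCritical G s) (W : MoveSequence G s a b q)
    (hv : v ∈ cliqueAt G a q t) (hlow : IsLow G s v) (hvu : G.Adj v u) (hu : mid a q t u = false)
    (hvw : G.Adj v w) (hw : mid a q t w = false) :
    (side G (mid a q t) false).Reachable u w := by
  have hmid := W.mid_eq_true hv
  have hkempe := (W.isGoodAt_mid hG hv hlow).toggle.kempe_reachable hG (by simp [hmid])
    ((side_toggle_adj_iff (by simp [hmid])).2 ⟨hvu, hu⟩)
    ((side_toggle_adj_iff (by simp [hmid])).2 ⟨hvw, hw⟩)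
  rwa [toggle_toggle] at hkempe

theorem exists_ne_adj_mid (hG : HighIndepCritical G s) (W : MoveSequence G s a b q)
    (hv : v ∈ cliqueAt G a q t) (hlow : IsLow G s v) (c : V) :
    ∃ e ≠ c, G.Adj v e ∧ mid a q t e = false := by
  have hmid := W.mid_eq_true hv
  obtain ⟨e, hec, he⟩ := (W.isGoodAt_mid hG hv hlow).toggle.exists_ne_adj hG (by simp [hmid]) .rfl c
  exact ⟨e, hec, (side_toggle_adj_iff (by simp [hmid])).1 he⟩

theorem mem_cliqueAt_of_mem_of_mem (hG : HighIndepCritical G s) (W : MoveSequence G s a b q)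
    (hD : (Set.Iio n).PairwiseDisjoint (cliqueAt G a q)) (hjn : j < n)
    (hz : z ∈ cliqueAt G a q n) (hzj : z ∈ cliqueAt G a q j) (hv : v ∈ cliqueAt G a q j)
    (hvb : v ≠ b j) : v ∈ cliqueAt G a q n := by
  have hmid : mid a q n v = true := by
    by_contra! h
    have hq := (W.mid_eq_false_iff.1 (Bool.eq_false_of_not_eq_true h)).1
    simp [W.q_eq_true_of_lt hD hjn hv hvb] at hq
  rcases eq_or_ne z v with rfl | hzv
  · exact hz
  · exact hz.trans (Adj.reachable
      (side_adj.2 ⟨W.isClique_cliqueAt hG j hzj hv hzv, W.mid_eq_true hz, hmid⟩))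

theorem adj_of_mem_of_mem (hG : HighIndepCritical G s) (W : MoveSequence G s a b q)
    (hD : (Set.Iio n).PairwiseDisjoint (cliqueAt G a q))
    (hC : (Set.Iio n).PairwiseDisjoint (cycleAt G b q)) (hjn : j < n)
    (hz : z ∈ cliqueAt G a q n) (hzj : z ∈ cliqueAt G a q j) (hv : v ∈ cliqueAt G a q j)
    (hvb : v ≠ b j) : G.Adj (a n) v := by
  refine W.isClique_cliqueAt hG n .rfl
    (W.mem_cliqueAt_of_mem_of_mem hG hD hjn hz hzj hv hvb) fun han => ?_
  simpa [han, W.mid_eq_true hv] using W.mid_a_eq_false hD hC hjn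

-- If the clique of round `m + 1` met an earlier clique of round `j < m`, a low vertex `v` common to
-- both would have a second outer neighbour `e`. Kempe chains through `v` in the two rounds join `e`
-- to `a (m + 1)` and to `b j`, so the cycles of rounds `m` and `j` would meet.
theorem eq_of_mem_cliqueAt (hG : HighIndepCritical G s) (W : MoveSequence G s a b q)
    (hD : (Set.Iio (m + 1)).PairwiseDisjoint (cliqueAt G a q))
    (hC : (Set.Iio (m + 1)).PairwiseDisjoint (cycleAt G b q)) (hjm : j ≤ m)
    (hz : z ∈ cliqueAt G a q (m + 1)) (hzj : z ∈ cliqueAt G a q j) : j = m := by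
  have hj : j < m + 1 := Nat.lt_succ_of_le hjm
  obtain ⟨v, hlow, hvb, -, hvj⟩ := (W.good j).toggle.exists_low hG (W.mid_a j) (b j)
  have hvm := W.mem_cliqueAt_of_mem_of_mem hG hD hj hz hzj hvj hvb
  have hva := (W.adj_of_mem_of_mem hG hD hC hj hz hzj hvj hvb).symm
  obtain ⟨e, hea, hve, he⟩ := W.exists_ne_adj_mid hG hvj hlow (a (m + 1))
  have heC : e ∈ cycleAt G b q m := W.mem_cycleAt_of_reachable_mid hC hjm
    (W.kempe_reachable_mid hG hvj hlow hva (W.mid_a_eq_false hD hC hj) hve he)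
  have hvb' : G.Adj v (b j) := W.isClique_cliqueAt hG j hvj (W.b_mem_cliqueAt j) hvb
  have heb := W.kempe_reachable_mid hG hvm hlow hve
    (W.mid_eq_false_iff.2 ⟨W.q_eq_false heC, hea⟩) hvb'
    (W.mid_eq_false_iff.2 ⟨W.q_b_eq_false hD hC hj, (W.a_ne_b hD hC le_rfl hj).symm⟩)
  exact hC.elim_set hj m.lt_succ_self (b j) .rfl
    (heC.trans (heb.mono (side_toggle_le (W.q_a (m + 1)))))

theorem disjoint_cliqueAt (hG : HighIndepCritical G s) (W : MoveSequence G s a b q)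
    (hfree : G.CliqueFree (s + 3)) (hD : (Set.Iio n).PairwiseDisjoint (cliqueAt G a q))
    (hC : (Set.Iio n).PairwiseDisjoint (cycleAt G b q)) (hjn : j < n) :
    Disjoint (cliqueAt G a q n) (cliqueAt G a q j) := by
  refine Set.disjoint_left.2 fun z hz hzj => ?_
  obtain ⟨m, rfl⟩ := Nat.exists_eq_add_one_of_ne_zero (Nat.ne_zero_of_lt hjn)
  obtain rfl := W.eq_of_mem_cliqueAt hG hD hC (Nat.le_of_lt_succ hjn) hz hzj
  have hzb : z ≠ b j := by
    rintro rfl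
    have := (W.mid_eq_false_iff (t := j + 1)).2
      ⟨W.q_b_eq_false hD hC hjn, (W.a_ne_b hD hC le_rfl hjn).symm⟩
    simp [W.mid_eq_true hz] at this
  refine (W.isGoodAt_b hG j).not_cliqueFree hG (W.q_b j) (W.a_mem_cycleAt j) (W.good (j + 1)).low
    (W.round j).ne' (z := z) ?_ hzb (W.adj_of_mem_of_mem hG hD hC hjn hz hzj hzj hzb) hfree
  rw [(W.round j).eq_toggle, toggle_toggle]
  exact (W.b_mem_cliqueAt j).symm.trans hzj

theorem mem_cycleAt_of_mem_of_mem (hG : HighIndepCritical G s) (W : MoveSequence G s a b q)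
    (hD : (Set.Iio (m + 1)).PairwiseDisjoint (cliqueAt G a q))
    (hC : (Set.Iio m).PairwiseDisjoint (cycleAt G b q)) (hj : j < m) (hz : z ∈ cycleAt G b q m)
    (hzj : z ∈ cycleAt G b q j) (hc : (side G (q (j + 1)) false).Adj (a (j + 1)) c) :
    c ∈ cycleAt G b q m := by
  have hza : z ≠ a (j + 1) := by
    rintro rfl
    have := W.q_eq_false hz
    simp [W.q_a_eq_true hD hC hj (Nat.succ_lt_succ hj)] at this
  obtain ⟨v, hv, hzv⟩ :=
    exists_adj_reachable_deleteIncidenceSet (hzj.symm.trans (W.a_mem_cycleAt j)) hza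
  rw [← side_toggle_eq_deleteIncidenceSet (W.q_a (j + 1))] at hzv
  have hzc := hzv.trans ((W.good (j + 1)).kempe_reachable hG (W.q_a (j + 1)) hv hc)
  refine (reachable_induction (P := fun v => v ∈ cycleAt G b q m ∧ v ∈ cycleAt G b q j)
    ⟨hz, hzj⟩ (fun v w _ hvw ⟨hvm, hvj⟩ => ?_) hzc).1
  obtain ⟨hvw, -, hqw⟩ := side_adj.1 hvw
  obtain ⟨hqw, hwa⟩ := W.mid_eq_false_iff.1 hqw
  have hwj := W.mem_cycleAt_of_adj hvj hvw hqw
  exact ⟨W.mem_cycleAt_of_adj hvm hvw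
    (W.q_eq_false_of_lt hC hj (by lia) le_rfl hwj hwa), hwj⟩

theorem adj_b_of_mem_of_mem (hG : HighIndepCritical G s) (W : MoveSequence G s a b q)
    (hD : (Set.Iio (m + 1)).PairwiseDisjoint (cliqueAt G a q))
    (hC : (Set.Iio m).PairwiseDisjoint (cycleAt G b q)) (hj : j < m)
    (hcm : c ∈ cycleAt G b q m) (hc : (side G (q (j + 1)) false).Adj (a (j + 1)) c) :
    G.Adj c (b m) := by
  by_contra hn
  have hcj : c ∈ cycleAt G b q j := (W.a_mem_cycleAt j).trans hc.reachable
  have hnext {v} (hv : (side G (q (m + 1)) false).Adj c v) :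
      (side G (q (j + 1)) false).Adj c v ∧ v ≠ a (j + 1) := by
    obtain ⟨hcv, -, hqv⟩ := side_adj.1 hv
    have hvb : v ≠ b m := fun h => hn (h ▸ hcv)
    rw [(W.round m).eq_toggle, toggle_of_ne hvb] at hqv
    obtain ⟨hvj, hva⟩ := W.mem_cycleAt_of_mid_eq_false hD hC hj hcj hc.ne' hcv hqv
    exact ⟨side_adj.2 ⟨hcv, W.q_eq_false hcj, W.q_eq_false hvj⟩, hva⟩
  have hb := W.isGoodAt_b hG m
  obtain ⟨v, -, hv⟩ := hb.exists_ne_adj hG (W.q_b m) hcm c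
  obtain ⟨w, hwv, hw⟩ := hb.exists_ne_adj hG (W.q_b m) hcm v
  rcases (W.isGoodAt_b hG j).eq_or_eq_of_adj hG (W.q_b j) hcj hwv (hnext hw).1 (hnext hv).1
    hc.symm with ha | ha
  · exact (hnext hw).2 ha.symm
  · exact (hnext hv).2 ha.symm

theorem mem_cliqueAt_of_adj_b (hG : HighIndepCritical G s) (W : MoveSequence G s a b q)
    (hD : (Set.Iio (m + 1)).PairwiseDisjoint (cliqueAt G a q))
    (hC : (Set.Iio m).PairwiseDisjoint (cycleAt G b q)) (hj : j < m)
    (hcm : c ∈ cycleAt G b q m) (hlow : IsLow G s c)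
    (hc : (side G (q (j + 1)) false).Adj (a (j + 1)) c) (hcb : G.Adj c (b m))
    (hd : d ∈ cliqueAt G a q m) (hda : d ≠ a m) (hdb : d ≠ b m) :
    d ∈ cliqueAt G a q (j + 1) := by
  have hcj : c ∈ cycleAt G b q j := (W.a_mem_cycleAt j).trans hc.reachable
  have hbj := W.q_eq_true_of_le hD hj (W.b_mem_cliqueAt m) (W.round m).ne
  have hdj := W.q_eq_true_of_le hD hj hd hda
  have hcd : G.Adj c d := ((W.isGoodAt_b hG j).move hG (W.q_b j) hcj hlow).adj_of_reachable hG
    (W.q_eq_false hcj) hcb hbj (Adj.reachable (side_adj.2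
      ⟨W.isClique_cliqueAt hG m (W.b_mem_cliqueAt m) hd hdb.symm, hbj, hdj⟩))
  have hqc := W.q_eq_false hcm
  have hclique := ((W.isGoodAt_b hG m).move hG (W.q_b m) hcm hlow).toggle.isClique hG
    (by simp [hqc])
  have hadj {v} (hcv : G.Adj c v) (hv : q (m + 1) v = true) :
      (side G (toggle c (q (m + 1))) true).Reachable c v :=
    Adj.reachable ((side_toggle_adj_iff (by simp [hqc])).2 ⟨hcv, hv⟩)
  rcases eq_or_ne (a (j + 1)) d with rfl | had
  · exact .rfl
  have had := (side_adj.1 (hclique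
    (hadj (side_adj.1 hc).1.symm (W.q_a_eq_true hD hC hj (Nat.succ_lt_succ hj)))
    (hadj hcd (W.succ_eq_true_iff.2 ⟨W.mid_eq_true hd, hdb⟩)) had)).1
  exact Adj.reachable (side_adj.2 ⟨had, W.mid_a _, (toggle_of_ne had.ne').trans hdj⟩)

theorem disjoint_cycleAt (hG : HighIndepCritical G s) (W : MoveSequence G s a b q)
    (hfree : G.CliqueFree (s + 3)) (hD : (Set.Iio (m + 1)).PairwiseDisjoint (cliqueAt G a q))
    (hC : (Set.Iio m).PairwiseDisjoint (cycleAt G b q)) (hj : j < m) :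
    Disjoint (cycleAt G b q m) (cycleAt G b q j) := by
  refine Set.disjoint_left.2 fun z hz hzj => ?_
  obtain ⟨c, hc, hlow⟩ := (W.round j).exists_low
  have hcm := W.mem_cycleAt_of_mem_of_mem hG hD hC hj hz hzj hc
  have hcb := W.adj_b_of_mem_of_mem hG hD hC hj hcm hc
  rcases (Nat.succ_le_of_lt hj).eq_or_lt with rfl | hjm
  · exact (W.good (j + 1)).not_cliqueFree hG (W.q_a _) hc.reachable hlow hc.ne'
      (W.b_mem_cliqueAt _) (W.round _).ne hcb hfree
  · obtain ⟨d, -, hdb, hda, hd⟩ := (W.good m).toggle.exists_low hG (W.mid_a m) (b m)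
    have hdj := W.mem_cliqueAt_of_adj_b hG hD hC hj hcm hlow hc hcb hd hda hdb
    exact hjm.ne (hD.elim_set (Set.mem_Iio.2 (hjm.trans m.lt_succ_self))
      (Set.mem_Iio.2 m.lt_succ_self) d hdj hd)

theorem pairwiseDisjoint (hG : HighIndepCritical G s) (W : MoveSequence G s a b q)
    (hfree : G.CliqueFree (s + 3)) (n : ℕ) :
    (Set.Iio n).PairwiseDisjoint (cliqueAt G a q) ∧
      (Set.Iio n).PairwiseDisjoint (cycleAt G b q) := by
  induction n with
  | zero => simp
  | succ n ih =>
    obtain ⟨hD, hC⟩ := ih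
    rw [← Order.succ_eq_add_one, Order.Iio_succ_eq_insert]
    have hD' := hD.insert fun j hj _ => W.disjoint_cliqueAt hG hfree hD hC hj
    refine ⟨hD', hC.insert fun j hj _ => W.disjoint_cycleAt hG hfree ?_ hC hj⟩
    rwa [← Order.succ_eq_add_one, Order.Iio_succ_eq_insert]

theorem injective_a (hG : HighIndepCritical G s) (W : MoveSequence G s a b q)
    (hfree : G.CliqueFree (s + 3)) : Function.Injective a := by
  intro i j hij
  exact (W.pairwiseDisjoint hG hfree (i + j + 1)).1.elim_set (Set.mem_Iio.2 (by lia))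
    (Set.mem_Iio.2 (by lia)) (a i) .rfl (hij ▸ .rfl)

end MoveSequence

theorem HighIndepCritical.not_cliqueFree_add_three [Finite V] (hG : HighIndepCritical G s) :
    ¬ G.CliqueFree (s + 3) := fun hfree =>
  have ⟨a, _, _, W⟩ := exists_moveSequence hG
  not_injective_infinite_finite a (W.injective_a hG hfree)

end MoveSequences

section Conclusion

variable {V : Type*} {G : SimpleGraph V} {n s : ℕ}

theorem colorable_deleteIncidenceSet {x : V} (hn : 0 < n) (h : (G.induce {x}ᶜ).Colorable n) :
    (G.deleteIncidenceSet x).Colorable n := by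
  classical
  obtain ⟨c⟩ := h
  refine ⟨Coloring.mk (fun v => if hv : v ≠ x then c ⟨v, hv⟩ else ⟨0, hn⟩) fun {u v} huv => ?_⟩
  obtain ⟨huv, hu, hv⟩ := deleteIncidenceSet_adj.1 huv
  simpa [hu, hv] using c.valid (v := ⟨u, hu⟩) (w := ⟨v, hv⟩) huv

theorem nonempty_iso_top [Finite V] (hdel : ∀ x, (G.deleteIncidenceSet x).Colorable n)
    {K : Finset V} (hK : G.IsNClique (n + 1) K) :
    Nonempty (G ≃g (⊤ : SimpleGraph (Fin (n + 1)))) := by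
  have := Fintype.ofFinite V
  have huniv : K = Finset.univ := by
    refine Finset.eq_univ_of_forall fun x => ?_
    by_contra hx
    have hclique : (G.deleteIncidenceSet x).IsClique K := fun u hu v hv huv =>
      deleteIncidenceSet_adj.2 ⟨hK.isClique hu hv huv, fun h => hx (h ▸ hu), fun h => hx (h ▸ hv)⟩
    have hle := hclique.card_le_of_colorable (hdel x)
    rw [hK.card_eq] at hle
    exact n.not_succ_le_self hle
  subst huniv
  obtain rfl : G = ⊤ := isClique_univ.1 (by simpa using hK.isClique)
  exact ⟨Iso.completeGraph (Fintype.equivFinOfCardEq hK.card_eq)⟩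

protected theorem HighIndepCritical.nonempty_iso_top [Finite V] (hG : HighIndepCritical G s) :
    Nonempty (G ≃g (⊤ : SimpleGraph (Fin (s + 3)))) := by
  have hfree := hG.not_cliqueFree_add_three
  simp only [CliqueFree, not_forall, not_not] at hfree
  obtain ⟨K, hK⟩ := hfree
  exact nonempty_iso_top hG.colorable_delete hK

theorem ncard_neighborSet [Fintype V] [DecidableRel G.Adj] (v : V) :
    (G.neighborSet v).ncard = G.degree v := by
  simp only [← coe_neighborFinset, Set.ncard_coe_finset, card_neighborFinset_eq_degree]

theorem highIndepCritical [Fintype V] [DecidableRel G.Adj] (hs : 3 ≤ s)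
    (hχ : G.chromaticNumber = (s + 3 : ℕ))
    (hcrit : ∀ v : V, (G.induce {v}ᶜ).chromaticNumber < G.chromaticNumber)
    (hΔ : G.maxDegree ≤ s + 3)
    (hind : ∀ u v : V, s + 3 ≤ G.degree u → s + 3 ≤ G.degree v → ¬ G.Adj u v) :
    HighIndepCritical G s := by
  have hnot : ¬ G.Colorable (s + 2) := by
    rw [← chromaticNumber_le_iff_colorable, hχ, Nat.cast_le]
    lia
  have hdel (x : V) : (G.deleteIncidenceSet x).Colorable (s + 2) := by
    refine colorable_deleteIncidenceSet (Nat.succ_pos _) (chromaticNumber_le_iff_colorable.1 ?_)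
    exact Order.le_of_lt_add_one ((hcrit x).trans_eq (hχ.trans (Nat.cast_succ _)))
  have hlow (v : V) (hv : ¬ s + 3 ≤ G.degree v) : IsLow G s v := by
    have hle := le_ncard_neighborSet hnot (hdel v)
    rw [IsLow]
    rw [ncard_neighborSet] at hle ⊢
    lia
  refine ⟨hs, hnot, hdel, fun v => ?_, fun u v huv => ?_⟩
  · exact (ncard_neighborSet v).trans_le ((G.degree_le_maxDegree v).trans hΔ)
  · by_contra! h
    exact hind u v (not_not.1 (mt (hlow u) h.1)) (not_not.1 (mt (hlow v) h.2)) huv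

end Conclusion

end CriticalGraph

theorem stmt_1_general {V : Type*} [Fintype V] (G : SimpleGraph V) [DecidableRel G.Adj] (k : ℕ)
    (hχ : G.chromaticNumber = k)
    (hcrit : ∀ v : V, (G.induce ({v}ᶜ : Set V)).chromaticNumber < G.chromaticNumber)
    (hΔ : G.maxDegree ≤ k) (hk : 6 ≤ k)
    (hind : ∀ u v : V, k ≤ G.degree u → k ≤ G.degree v → ¬ G.Adj u v) :
    Nonempty (G ≃g (⊤ : SimpleGraph (Fin k))) := by
  obtain ⟨s, hs, rfl⟩ : ∃ s, 3 ≤ s ∧ k = s + 3 := ⟨k - 3, by lia, by lia⟩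
  exact (CriticalGraph.highIndepCritical hs hχ hcrit hΔ hind).nonempty_iso_top

/-- Corollary N: `K_{χ(G)}` is the only critical graph `G` with
`χ(G) ≥ Δ(G) ≥ 6` such that the set of vertices of degree at least
`χ(G)` is independent. -/
theorem stmt_1 {V : Type*} [Fintype V] [DecidableEq V] (G : SimpleGraph V)
    [DecidableRel G.Adj] (k : ℕ)
    (hk : G.chromaticNumber = k)
    (hcrit : ∀ v : V, (G.induce ({v}ᶜ : Set V)).chromaticNumber < G.chromaticNumber)
    (hχΔ : G.maxDegree ≤ k) (hΔ : 6 ≤ G.maxDegree)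
    (hind : ∀ u v : V, k ≤ G.degree u → k ≤ G.degree v → ¬ G.Adj u v) :
    Nonempty (G ≃g (⊤ : SimpleGraph (Fin k))) := by
  exact stmt_1_general G k hk hcrit hχΔ (hΔ.trans hχΔ) hind
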